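/- arXiv:2109.14504 — 2 statements merged into one kernel-verified Lean document; each statement's English description precedes it below -/
import Mathlib

section
/- Let 1 < p ≤ ∞ and let p* be the Hölder conjugate of p. There exist absolute constants C, c, c₁, c₂ ∈ (0,∞) such that for every m ∈ ℕ, every 1 ≤ n < m, and all semiaxes σ₁ ≥ σ₂ ≥ … ≥ σ_m > 0, if G_{n,m} is an n×m random matrix with i.i.d. standard Gaussian entries, then with probability at least 1 − c₁·exp(−c₂·n) one has rad(E^m_{p,σ}, ker G_{n,m}) ≤ C·√(p*)·n^{−1/2}·(Σ_{j=k}^m σ_j^{p*})^{1/p*}, where k := max(1, ⌈c·n/p*⌉). -/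
open MeasureTheory ProbabilityTheory
open scoped ENNReal NNReal

/-- The `ℓ_p`-(quasi-)norm on `ℝ^m`, for `0 < p ≤ ∞`. -/
noncomputable def lpnorm (p : ℝ≥0∞) {m : ℕ} (x : Fin m → ℝ) : ℝ :=
  if p = ∞ then ⨆ j, |x j| else (∑ j, |x j| ^ p.toReal) ^ (1 / p.toReal)

/-- The `ℓ_p`-ellipsoid with semiaxes `σ`. -/
noncomputable def ellipsoid (p : ℝ≥0∞) {m : ℕ} (σ : Fin m → ℝ) : Set (Fin m → ℝ) :=
  {x | lpnorm p (fun j => x j / σ j) ≤ 1}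

/-- `rad_q(K, E)`: the supremum of the `ℓ_q`-norm over `K ∩ E`. -/
noncomputable def radq (q : ℝ≥0∞) {m : ℕ} (K E : Set (Fin m → ℝ)) : ℝ :=
  sSup (lpnorm q '' (K ∩ E))

/-- The distribution of an `n × m` random matrix with i.i.d. standard Gaussian entries. -/
noncomputable def gaussianMatrix (n m : ℕ) : Measure (Fin n → Fin m → ℝ) :=
  Measure.pi fun _ : Fin n => Measure.pi fun _ : Fin m => gaussianReal 0 1

/-- The kernel of a matrix `A ∈ ℝ^{n×m}`, as a subset of `ℝ^m`. -/
def kerSet {n m : ℕ} (A : Fin n → Fin m → ℝ) : Set (Fin m → ℝ) :=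
  {x | ∀ i, ∑ j, A i j * x j = 0}

/-- The Hölder conjugate `p*` of `p ∈ (1, ∞]`, as a real number
(with the convention `(∞ : ℝ≥0∞).toReal = 0`, so `pstar ∞ = 1`). -/
noncomputable def pstar (p : ℝ≥0∞) : ℝ := (1 - 1 / p.toReal)⁻¹


lemma row_law {m : ℕ} (θ : Fin m → ℝ) :
    (Measure.pi fun _ : Fin m => gaussianReal 0 1).map (fun a => ∑ j, a j * θ j)
      = (gaussianReal 0 1).map (fun y => y * √(∑ j, θ j ^ 2)) := by
  have hmeas : Measurable (fun a : Fin m → ℝ => ∑ j, a j * θ j) := by fun_prop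
  have := Measure.isProbabilityMeasure_map
    (μ := Measure.pi fun _ : Fin m => gaussianReal 0 1) hmeas.aemeasurable
  have hmeas2 : Measurable (fun y : ℝ => y * √(∑ j, θ j ^ 2)) := by fun_prop
  have := Measure.isProbabilityMeasure_map (μ := gaussianReal 0 1) hmeas2.aemeasurable
  apply Measure.ext_of_charFun
  ext t
  have hs : 0 ≤ ∑ j, θ j ^ 2 := Finset.sum_nonneg fun j _ => sq_nonneg _
  rw [gaussianReal_map_mul_const, charFun_gaussianReal, charFun_apply_real,
    integral_map hmeas.aemeasurable (by fun_prop)]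
  have h1 : ∀ a : Fin m → ℝ, Complex.exp (t * ((∑ j, a j * θ j : ℝ) : ℂ) * Complex.I)
      = ∏ j, Complex.exp (((t * θ j : ℝ) : ℂ) * (a j : ℂ) * Complex.I) := by
    intro a
    rw [← Complex.exp_sum]
    congr 1
    push_cast
    rw [Finset.mul_sum, Finset.sum_mul]
    refine Finset.sum_congr rfl fun j _ => by ring
  simp_rw [h1]
  rw [integral_fintype_prod_eq_prod (μ := fun _ : Fin m => gaussianReal 0 1)
    (fun j (y : ℝ) => Complex.exp (((t * θ j : ℝ) : ℂ) * (y : ℂ) * Complex.I))]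
  simp_rw [← charFun_apply_real, charFun_gaussianReal]
  rw [← Complex.exp_sum]
  congr 1
  have h2 : ((√(∑ j, θ j ^ 2)) : ℝ) ^ 2 = ∑ j, θ j ^ 2 := Real.sq_sqrt hs
  simp only [NNReal.coe_mul, NNReal.coe_mk, NNReal.coe_one, Complex.ofReal_mul]
  rw [h2]
  push_cast
  simp only [mul_zero, zero_mul, zero_sub, mul_one, one_mul]
  rw [Finset.sum_neg_distrib, Finset.sum_mul, Finset.sum_div]
  congr 1
  refine Finset.sum_congr rfl fun j _ => by ring

lemma gauss_one (b : ℝ) (hb : 0 < 1 + 2 * b) :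
    Integrable (fun y : ℝ => Real.exp (-b * y ^ 2)) (gaussianReal 0 1) ∧
    ∫ y, Real.exp (-b * y ^ 2) ∂(gaussianReal 0 1) = (1 + 2 * b) ^ (-(1 / 2 : ℝ)) := by
  have key : ∀ y : ℝ, gaussianPDFReal 0 1 y * Real.exp (-b * y ^ 2)
      = (√(2 * Real.pi))⁻¹ * Real.exp (-(b + 1 / 2) * y ^ 2) := by
    intro y
    rw [gaussianPDFReal]
    simp only [NNReal.coe_one, mul_one, sub_zero]
    rw [mul_assoc, ← Real.exp_add]
    congr 2
    ring
  have hb' : 0 < b + 1 / 2 := by linarith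
  constructor
  · rw [gaussianReal_of_var_ne_zero _ one_ne_zero,
      integrable_withDensity_iff (measurable_gaussianPDF 0 1)
        (Filter.Eventually.of_forall fun y => by simp [gaussianPDF])]
    have := (integrable_exp_neg_mul_sq hb').const_mul (√(2 * Real.pi))⁻¹
    refine this.congr (Filter.Eventually.of_forall fun y => ?_)
    simp only
    rw [← key y, toReal_gaussianPDF, mul_comm]
  · rw [integral_gaussianReal_eq_integral_smul one_ne_zero]
    simp only [smul_eq_mul]
    simp_rw [key]
    rw [integral_const_mul, integral_gaussian, ← Real.sqrt_inv, ← Real.sqrt_mul (by positivity),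
      Real.rpow_neg hb.le, ← Real.sqrt_eq_rpow, ← Real.sqrt_inv]
    congr 1
    have := Real.pi_pos.ne'
    rw [show b + 1 / 2 = (1 + 2 * b) / 2 by ring]
    field_simp

lemma gauss_row {m : ℕ} (b : ℝ) (θ : Fin m → ℝ) (hb : 0 < 1 + 2 * (b * ∑ j, θ j ^ 2)) :
    Integrable (fun a : Fin m → ℝ => Real.exp (-b * (∑ j, a j * θ j) ^ 2))
      (Measure.pi fun _ : Fin m => gaussianReal 0 1) ∧
    ∫ a, Real.exp (-b * (∑ j, a j * θ j) ^ 2) ∂(Measure.pi fun _ : Fin m => gaussianReal 0 1)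
      = (1 + 2 * (b * ∑ j, θ j ^ 2)) ^ (-(1 / 2 : ℝ)) := by
  have hs : 0 ≤ ∑ j, θ j ^ 2 := Finset.sum_nonneg fun j _ => sq_nonneg _
  have hmeas : Measurable (fun a : Fin m → ℝ => ∑ j, a j * θ j) := by fun_prop
  have hmeas2 : Measurable (fun y : ℝ => y * √(∑ j, θ j ^ 2)) := by fun_prop
  have hF : Continuous (fun y : ℝ => Real.exp (-b * y ^ 2)) := by fun_prop
  obtain ⟨h1, h2⟩ := gauss_one _ hb
  have e : ∀ y : ℝ, Real.exp (-b * (y * √(∑ j, θ j ^ 2)) ^ 2)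
      = Real.exp (-(b * ∑ j, θ j ^ 2) * y ^ 2) := by
    intro y
    rw [mul_pow, Real.sq_sqrt hs]
    congr 1
    ring
  constructor
  · have := (integrable_map_measure (μ := Measure.pi fun _ : Fin m => gaussianReal 0 1)
      (g := fun y : ℝ => Real.exp (-b * y ^ 2)) hF.aestronglyMeasurable hmeas.aemeasurable)
    refine this.1 ?_
    rw [row_law, integrable_map_measure hF.aestronglyMeasurable hmeas2.aemeasurable]
    refine h1.congr (Filter.Eventually.of_forall fun y => (e y).symm)
  · rw [← integral_map (f := fun y : ℝ => Real.exp (-b * y ^ 2)) hmeas.aemeasurable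
      hF.aestronglyMeasurable, row_law, integral_map hmeas2.aemeasurable hF.aestronglyMeasurable]
    simp_rw [e]
    exact h2

lemma gauss_mat {n m : ℕ} (b : ℝ) (θ : Fin m → ℝ) (hb : 0 < 1 + 2 * (b * ∑ j, θ j ^ 2)) :
    Integrable (fun A : Fin n → Fin m → ℝ => Real.exp (-b * ∑ i, (∑ j, A i j * θ j) ^ 2))
      (gaussianMatrix n m) ∧
    ∫ A, Real.exp (-b * ∑ i, (∑ j, A i j * θ j) ^ 2) ∂(gaussianMatrix n m)
      = Real.exp (-(n / 2 : ℝ) * Real.log (1 + 2 * (b * ∑ j, θ j ^ 2))) := by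
  obtain ⟨h1, h2⟩ := gauss_row b θ hb
  have e : ∀ A : Fin n → Fin m → ℝ, Real.exp (-b * ∑ i, (∑ j, A i j * θ j) ^ 2)
      = ∏ i, Real.exp (-b * (∑ j, A i j * θ j) ^ 2) := by
    intro A
    rw [← Real.exp_sum, Finset.mul_sum]
  simp_rw [e]
  unfold gaussianMatrix
  constructor
  · exact Integrable.fintype_prod (μ := fun _ : Fin n => Measure.pi fun _ : Fin m => gaussianReal 0 1)
      (f := fun _ (a : Fin m → ℝ) => Real.exp (-b * (∑ j, a j * θ j) ^ 2)) (fun _ => h1)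
  · rw [integral_fintype_prod_eq_prod
      (μ := fun _ : Fin n => Measure.pi fun _ : Fin m => gaussianReal 0 1)
      (fun _ (a : Fin m → ℝ) => Real.exp (-b * (∑ j, a j * θ j) ^ 2))]
    simp only [h2, Finset.prod_const, Finset.card_univ, Fintype.card_fin]
    rw [Real.rpow_def_of_pos hb, ← Real.exp_nat_mul]
    congr 1
    ring

lemma gibbs {ι : Type*} [Fintype ι] (ρ π f : ι → ℝ) (hρ : ∀ i, 0 ≤ ρ i) (hs : ∑ i, ρ i = 1)
    (hπ : ∀ i, 0 < π i) (M : ℝ) (hM : ∑ i, π i * Real.exp (f i) ≤ Real.exp M) :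
    ∑ i, ρ i * f i ≤ M + ∑ i, ρ i * Real.log (ρ i / π i) := by
  have h1 := convexOn_exp.map_sum_le (t := Finset.univ) (w := ρ)
    (p := fun i => f i - Real.log (ρ i / π i)) (fun i _ => hρ i) hs (fun i _ => Set.mem_univ _)
  simp only [smul_eq_mul] at h1
  have h2 : ∑ i, ρ i * Real.exp (f i - Real.log (ρ i / π i)) ≤ ∑ i, π i * Real.exp (f i) := by
    refine Finset.sum_le_sum fun i _ => ?_
    rcases (hρ i).eq_or_lt with h | h
    · rw [← h, zero_mul]
      exact mul_nonneg (hπ i).le (Real.exp_pos _).le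
    · rw [Real.exp_sub, Real.exp_log (div_pos h (hπ i))]
      have := hπ i
      apply le_of_eq
      field_simp
  have h3 := Real.exp_le_exp.1 ((h1.trans h2).trans hM)
  simp only [mul_sub, Finset.sum_sub_distrib] at h3
  linarith

section prodexp
variable {Ω : Type*} [Fintype Ω] {N : ℕ}

lemma pe_prod (ρ : Ω → ℝ) (g : Fin N → Ω → ℝ) :
    ∑ J : Fin N → Ω, (∏ i, ρ (J i)) * ∏ i, g i (J i) = ∏ i, ∑ ω, ρ ω * g i ω := by
  classical
  rw [Finset.prod_univ_sum, Fintype.piFinset_univ]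
  refine Finset.sum_congr rfl fun J _ => ?_
  rw [Finset.prod_mul_distrib]

lemma pe_total (ρ : Ω → ℝ) :
    ∑ J : Fin N → Ω, (∏ i, ρ (J i)) = (∑ ω, ρ ω) ^ N := by
  have := pe_prod ρ (fun (_ : Fin N) (_ : Ω) => (1 : ℝ))
  simpa using this

lemma pe_one (ρ : Ω → ℝ) (hs : ∑ ω, ρ ω = 1) (g : Ω → ℝ) (i₀ : Fin N) :
    ∑ J : Fin N → Ω, (∏ i, ρ (J i)) * g (J i₀) = ∑ ω, ρ ω * g ω := by
  classical
  have := pe_prod ρ (fun (i : Fin N) (ω : Ω) => if i = i₀ then g ω else 1)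
  simp only [Finset.prod_ite_eq', Finset.mem_univ, if_true] at this
  rw [this, Finset.prod_eq_single i₀]
  · simp
  · intro i _ hi
    simp [hi, hs]
  · simp

lemma pe_two (ρ : Ω → ℝ) (g : Ω → ℝ) (h0 : ∑ ω, ρ ω * g ω = 0)
    (i₀ i₁ : Fin N) (hne : i₀ ≠ i₁) :
    ∑ J : Fin N → Ω, (∏ i, ρ (J i)) * (g (J i₀) * g (J i₁)) = 0 := by
  classical
  have := pe_prod ρ (fun (i : Fin N) (ω : Ω) =>
    (if i = i₀ then g ω else 1) * (if i = i₁ then g ω else 1))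
  simp only [Finset.prod_mul_distrib, Finset.prod_ite_eq', Finset.mem_univ, if_true] at this
  rw [this]
  apply Finset.prod_eq_zero (Finset.mem_univ i₀)
  simp [hne, h0]

lemma pe_var (ρ : Ω → ℝ) (hs : ∑ ω, ρ ω = 1) (g : Ω → ℝ) (h0 : ∑ ω, ρ ω * g ω = 0) :
    ∑ J : Fin N → Ω, (∏ i, ρ (J i)) * (∑ i, g (J i)) ^ 2 = N * ∑ ω, ρ ω * g ω ^ 2 := by
  have e : ∀ J : Fin N → Ω, (∏ i, ρ (J i)) * (∑ i, g (J i)) ^ 2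
      = ∑ i, ∑ l, (∏ i, ρ (J i)) * (g (J i) * g (J l)) := by
    intro J
    rw [sq, Finset.sum_mul_sum, Finset.mul_sum]
    simp_rw [Finset.mul_sum]
  simp_rw [e]
  rw [Finset.sum_comm]
  have : ∀ i : Fin N, ∑ J : Fin N → Ω, ∑ l, (∏ i, ρ (J i)) * (g (J i) * g (J l))
      = ∑ ω, ρ ω * g ω ^ 2 := by
    intro i
    rw [Finset.sum_comm, Finset.sum_eq_single i]
    · rw [← pe_one ρ hs (fun ω => g ω ^ 2) i]
      simp only [sq]
    · intro l _ hl
      exact pe_two ρ g h0 i l hl.symm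
    · simp
  simp [this]

lemma pe_kl (ρ π : Ω → ℝ) (hπ : ∀ i, 0 < π i) (hs : ∑ ω, ρ ω = 1) :
    ∑ J : Fin N → Ω, (∏ i, ρ (J i)) * Real.log ((∏ i, ρ (J i)) / ∏ i, π (J i))
      = N * ∑ ω, ρ ω * Real.log (ρ ω / π ω) := by
  have e : ∀ J : Fin N → Ω, (∏ i, ρ (J i)) * Real.log ((∏ i, ρ (J i)) / ∏ i, π (J i))
      = ∑ l, (∏ i, ρ (J i)) * Real.log (ρ (J l) / π (J l)) := by
    intro J
    by_cases h : ∏ i, ρ (J i) = 0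
    · simp [h]
    · rw [← Finset.mul_sum, ← Finset.prod_div_distrib, Real.log_prod]
      intro i _
      have := (Finset.prod_ne_zero_iff.1 h) i (Finset.mem_univ i)
      exact div_ne_zero this (hπ _).ne'
  simp_rw [e]
  rw [Finset.sum_comm]
  simp_rw [fun l : Fin N => pe_one ρ hs (fun ω => Real.log (ρ ω / π ω)) l]
  simp

end prodexp

/-- average of sampled vectors -/
noncomputable def theta {Ω : Type*} {N m : ℕ} (V : Ω → Fin m → ℝ) (L : ℝ) (J : Fin N → Ω)
    (j : Fin m) : ℝ := L / N * ∑ i, V (J i) j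

/-- the exponent -/
noncomputable def fexp {Ω : Type*} {N n m : ℕ} (V : Ω → Fin m → ℝ) (L : ℝ)
    (A : Fin n → Fin m → ℝ) (J : Fin N → Ω) : ℝ :=
  -2 * ∑ i, (∑ j, A i j * theta V L J j) ^ 2
    + (n / 2 : ℝ) * Real.log (1 + 2 * (2 * ∑ j, theta V L J j ^ 2))

/-- first good event -/
def good1 {Ω : Type*} [Fintype Ω] (N n m : ℕ) (π : Ω → ℝ) (V : Ω → Fin m → ℝ) (L : ℝ) :
    Set (Fin n → Fin m → ℝ) :=
  {A | ∑ J : Fin N → Ω, (∏ i, π (J i)) * Real.exp (fexp V L A J) < Real.exp (n / 20 : ℝ)}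

/-- second good event -/
def good2 {Ω : Type*} [Fintype Ω] (n m : ℕ) (π : Ω → ℝ) (V : Ω → Fin m → ℝ) :
    Set (Fin n → Fin m → ℝ) :=
  {A | ∑ ω, π ω * Real.exp (-(-1 / 4) * ∑ i, (∑ j, A i j * V ω j) ^ 2)
    < Real.exp (n / 2 * Real.log 2 + n / 20 : ℝ)}

lemma markov_exp {α : Type*} [MeasurableSpace α] (μ : Measure α) [IsProbabilityMeasure μ]
    (X : α → ℝ) (hX : Integrable X μ) (h0 : ∀ a, 0 ≤ X a) (K s : ℝ)
    (hK : ∫ a, X a ∂μ ≤ Real.exp K) :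
    μ.real {a | Real.exp (K + s) ≤ X a} ≤ Real.exp (-s) := by
  have h := mul_meas_ge_le_integral_of_nonneg (μ := μ) (f := X)
    (Filter.Eventually.of_forall h0) hX (Real.exp (K + s))
  have h2 := h.trans hK
  have e : Real.exp (-s) = Real.exp K / Real.exp (K + s) := by
    rw [← Real.exp_sub]; congr 1; ring
  rw [e, le_div_iff₀ (Real.exp_pos _), mul_comm]
  exact h2

lemma event_prob {Ω : Type*} [Fintype Ω] (N n m : ℕ) (π : Ω → ℝ) (hπ : ∀ ω, 0 < π ω)
    (hπs : ∑ ω, π ω ≤ 1) (V : Ω → Fin m → ℝ) (hV : ∀ ω, ∑ j, V ω j ^ 2 ≤ 1) (L : ℝ) :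
    ENNReal.ofReal (1 - 2 * Real.exp (-(1 / 20) * n)) ≤
      gaussianMatrix n m (good1 N n m π V L ∩ good2 n m π V) := by
  have hprob : IsProbabilityMeasure (gaussianMatrix n m) := by
    unfold gaussianMatrix; infer_instance
  set μ := gaussianMatrix n m with hμ
  have hπ0 : 0 ≤ ∑ ω, π ω := Finset.sum_nonneg fun ω _ => (hπ ω).le
  -- first
  have a1 : ∀ J : Fin N → Ω, 0 < 1 + 2 * (2 * ∑ j, theta V L J j ^ 2) := by
    intro J
    have : 0 ≤ ∑ j, theta V L J j ^ 2 := Finset.sum_nonneg fun j _ => sq_nonneg _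
    linarith
  have a2 : ∀ J : Fin N → Ω, Integrable (fun A => Real.exp (fexp V L A J)) μ ∧
      ∫ A, Real.exp (fexp V L A J) ∂μ = 1 := by
    intro J
    obtain ⟨h1, h2⟩ := gauss_mat (n := n) 2 (theta V L J) (a1 J)
    unfold fexp
    simp_rw [Real.exp_add]
    refine ⟨h1.mul_const _, ?_⟩
    rw [integral_mul_const, h2, ← Real.exp_add]
    simp
  have m1 := markov_exp μ
    (fun A => ∑ J : Fin N → Ω, (∏ i, π (J i)) * Real.exp (fexp V L A J))
    (integrable_finsetSum _ fun J _ => (a2 J).1.const_mul _)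
    (fun A => Finset.sum_nonneg fun J _ => mul_nonneg (Finset.prod_nonneg fun i _ => (hπ _).le)
      (Real.exp_pos _).le) 0 (n / 20 : ℝ) (by
      rw [integral_finsetSum _ fun J _ => (a2 J).1.const_mul _]
      simp_rw [integral_const_mul, (a2 _).2, mul_one]
      rw [pe_total, Real.exp_zero]
      exact pow_le_one₀ hπ0 hπs)
  -- second
  have b1 : ∀ ω, 0 < 1 + 2 * ((-1 / 4) * ∑ j, V ω j ^ 2) := by
    intro ω
    have := hV ω
    linarith
  have b2 : ∀ ω, Real.exp (-(n / 2 : ℝ) * Real.log (1 + 2 * ((-1 / 4) * ∑ j, V ω j ^ 2)))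
      ≤ Real.exp (n / 2 * Real.log 2) := by
    intro ω
    rw [Real.exp_le_exp, neg_mul, ← mul_neg, ← Real.log_inv]
    refine mul_le_mul_of_nonneg_left ?_ (by positivity)
    apply Real.log_le_log (inv_pos.2 (b1 ω))
    rw [inv_le_comm₀ (b1 ω) (by norm_num)]
    have := hV ω
    linarith
  have m2 := markov_exp μ
    (fun A => ∑ ω, π ω * Real.exp (-(-1 / 4) * ∑ i, (∑ j, A i j * V ω j) ^ 2))
    (integrable_finsetSum _ fun ω _ => (gauss_mat (n := n) (-1 / 4) (V ω) (b1 ω)).1.const_mul _)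
    (fun A => Finset.sum_nonneg fun ω _ => mul_nonneg (hπ _).le
      (Real.exp_pos _).le) (n / 2 * Real.log 2) (n / 20 : ℝ) (by
      rw [integral_finsetSum _ fun ω _ =>
        (gauss_mat (n := n) (-1 / 4) (V ω) (b1 ω)).1.const_mul _]
      simp_rw [integral_const_mul]
      calc _ ≤ ∑ ω, π ω * Real.exp (n / 2 * Real.log 2) := by
            refine Finset.sum_le_sum fun ω _ => mul_le_mul_of_nonneg_left ?_ (hπ ω).le
            rw [(gauss_mat (n := n) (-1 / 4) (V ω) (b1 ω)).2]
            exact b2 ω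
        _ ≤ _ := by
            rw [← Finset.sum_mul]
            exact mul_le_of_le_one_left (Real.exp_pos _).le hπs)
  rw [zero_add] at m1
  have hmeas : MeasurableSet (good1 N n m π V L ∩ good2 n m π V) := by
    apply MeasurableSet.inter
    · unfold good1 fexp
      apply measurableSet_lt
      · fun_prop
      · fun_prop
    · unfold good2
      apply measurableSet_lt
      · fun_prop
      · fun_prop
  have hc : μ.real (good1 N n m π V L ∩ good2 n m π V)ᶜ ≤ 2 * Real.exp (-(1 / 20) * n) := by
    have : (good1 N n m π V L ∩ good2 n m π V)ᶜ
      ⊆ {A | Real.exp (n / 20 : ℝ) ≤ ∑ J : Fin N → Ω, (∏ i, π (J i)) * Real.exp (fexp V L A J)}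
        ∪ {A | Real.exp (n / 2 * Real.log 2 + n / 20 : ℝ) ≤
          ∑ ω, π ω * Real.exp (-(-1 / 4) * ∑ i, (∑ j, A i j * V ω j) ^ 2)} := by
      rw [Set.compl_inter]
      apply Set.union_subset_union
      · intro A hA
        simpa [good1] using hA
      · intro A hA
        simpa [good2] using hA
    have h3 := (measureReal_mono this (μ := μ)).trans (measureReal_union_le _ _)
    have e : (-(n / 20 : ℝ)) = -(1 / 20) * n := by ring
    rw [e] at m1 m2
    linarith
  rw [probReal_compl_eq_one_sub hmeas] at hc
  rw [ENNReal.ofReal_le_iff_le_toReal (measure_ne_top _ _)]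
  change _ ≤ μ.real _
  linarith

lemma det_core {Ω : Type*} [Fintype Ω] (N n m : ℕ) (hn : 0 < n) (hN : 0 < N) (π : Ω → ℝ)
    (hπ : ∀ ω, 0 < π ω)
    (V : Ω → Fin m → ℝ) (hV : ∀ ω, ∑ j, V ω j ^ 2 ≤ 1) (L : ℝ) (A : Fin n → Fin m → ℝ)
    (h1 : A ∈ good1 N n m π V L) (h2 : A ∈ good2 n m π V)
    (x : Fin m → ℝ) (hx : ∑ j, x j ^ 2 = 1) (hA : ∀ i, ∑ j, A i j * x j = 0)
    (ρ : Ω → ℝ) (hρ : ∀ ω, 0 ≤ ρ ω) (hs : ∑ ω, ρ ω = 1)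
    (hm : ∀ j, ∑ ω, ρ ω * (L * V ω j) = x j)
    (D : ℝ) (hD : ∑ ω, ρ ω * Real.log (ρ ω / π ω) ≤ D) (hD1 : D ≤ n / 1000)
    (hD2 : N * D ≤ n / 10) (hL : L ^ 2 ≤ N / 250) : False := by
  have hn' : (0 : ℝ) < n := by exact_mod_cast hn
  have hN' : (0 : ℝ) < N := by exact_mod_cast hN
  have l1 := Real.log_two_gt_d9
  have l2 := Real.log_two_lt_d9
  -- column bound
  have c1 := gibbs ρ π (fun ω => -(-1 / 4) * ∑ i, (∑ j, A i j * V ω j) ^ 2) hρ hs hπ _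
    (le_of_lt h2)
  have c2 : ∑ ω, ρ ω * ∑ i, (∑ j, A i j * V ω j) ^ 2 ≤ 2 * n := by
    have e : ∑ ω, ρ ω * (-(-1 / 4) * ∑ i, (∑ j, A i j * V ω j) ^ 2)
        = (1 / 4) * ∑ ω, ρ ω * ∑ i, (∑ j, A i j * V ω j) ^ 2 := by
      rw [Finset.mul_sum]
      refine Finset.sum_congr rfl fun ω _ => by ring
    rw [e] at c1
    nlinarith
  -- main gibbs
  set R : (Fin N → Ω) → ℝ := fun J => ∏ i, ρ (J i) with hR
  have hR0 : ∀ J, 0 ≤ R J := fun J => Finset.prod_nonneg fun i _ => hρ _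
  have hRs : ∑ J, R J = 1 := by rw [hR, pe_total, hs, one_pow]
  have d1 := gibbs R (fun J => ∏ i, π (J i)) (fun J => fexp V L A J) hR0 hRs
    (fun J => Finset.prod_pos fun i _ => hπ _) _ (le_of_lt h1)
  rw [hR, pe_kl ρ π hπ hs, ← hR] at d1
  have d2 : (N : ℝ) * ∑ ω, ρ ω * Real.log (ρ ω / π ω) ≤ n / 10 :=
    (mul_le_mul_of_nonneg_left hD hN'.le).trans hD2
  -- expectation of ‖Aθ‖²
  have e1 : ∑ J, R J * ∑ i, (∑ j, A i j * theta V L J j) ^ 2 ≤ 2 * n / 250 := by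
    have z : ∀ i, ∑ ω, ρ ω * (L * ∑ j, A i j * V ω j) = 0 := by
      intro i
      rw [← hA i]
      simp_rw [← hm, Finset.mul_sum]
      rw [Finset.sum_comm]
      refine Finset.sum_congr rfl fun j _ => Finset.sum_congr rfl fun ω _ => by ring
    have y : ∀ i (J : Fin N → Ω), (∑ j, A i j * theta V L J j) ^ 2
        = (1 / N) ^ 2 * (∑ l, L * ∑ j, A i j * V (J l) j) ^ 2 := by
      intro i J
      rw [← mul_pow]
      congr 1
      unfold theta
      simp_rw [Finset.mul_sum]
      rw [Finset.sum_comm]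
      refine Finset.sum_congr rfl fun j _ => Finset.sum_congr rfl fun ω _ => by ring
    have w : ∑ J, R J * ∑ i, (∑ j, A i j * theta V L J j) ^ 2
        = (1 / N) ^ 2 * ∑ i, ∑ J, R J * (∑ l, L * ∑ j, A i j * V (J l) j) ^ 2 := by
      simp_rw [y]
      rw [Finset.sum_comm, Finset.mul_sum]
      refine Finset.sum_congr rfl fun J _ => ?_
      rw [Finset.mul_sum, Finset.mul_sum]
      refine Finset.sum_congr rfl fun i _ => by ring
    rw [w]
    have u : ∀ i, ∑ J, R J * (∑ l, L * ∑ j, A i j * V (J l) j) ^ 2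
        = N * ∑ ω, ρ ω * (L * ∑ j, A i j * V ω j) ^ 2 := fun i =>
      pe_var ρ hs (fun ω => L * ∑ j, A i j * V ω j) (z i)
    simp_rw [u]
    have t : ∑ i, (N : ℝ) * ∑ ω, ρ ω * (L * ∑ j, A i j * V ω j) ^ 2
        = N * L ^ 2 * ∑ ω, ρ ω * ∑ i, (∑ j, A i j * V ω j) ^ 2 := by
      simp_rw [Finset.mul_sum]
      rw [Finset.sum_comm]
      refine Finset.sum_congr rfl fun j _ => Finset.sum_congr rfl fun ω _ => ?_
      rw [← Finset.mul_sum]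
      ring
    rw [t]
    have s0 : 0 ≤ ∑ ω, ρ ω * ∑ i, (∑ j, A i j * V ω j) ^ 2 :=
      Finset.sum_nonneg fun ω _ => mul_nonneg (hρ ω) (Finset.sum_nonneg fun i _ => sq_nonneg _)
    calc (1 / N : ℝ) ^ 2 * (N * L ^ 2 * ∑ ω, ρ ω * ∑ i, (∑ j, A i j * V ω j) ^ 2)
        = (L ^ 2 / N) * ∑ ω, ρ ω * ∑ i, (∑ j, A i j * V ω j) ^ 2 := by field_simp
      _ ≤ (1 / 250 : ℝ) * (2 * (n : ℝ)) := by
          apply mul_le_mul _ c2 s0 (by norm_num)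
          rw [div_le_iff₀ hN']
          linarith
      _ = _ := by ring
  -- expectation of ‖θ-x‖²
  have e2 : ∑ J, R J * ∑ j, (theta V L J j - x j) ^ 2 ≤ 1 / 250 := by
    have z : ∀ j, ∑ ω, ρ ω * (L * V ω j - x j) = 0 := by
      intro j
      simp_rw [mul_sub, Finset.sum_sub_distrib, hm, ← Finset.sum_mul, hs]
      ring
    have y : ∀ j (J : Fin N → Ω), (theta V L J j - x j) ^ 2
        = (1 / N) ^ 2 * (∑ l, (L * V (J l) j - x j)) ^ 2 := by
      intro j J
      rw [← mul_pow]
      congr 1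
      unfold theta
      rw [Finset.sum_sub_distrib, ← Finset.mul_sum]
      simp
      field_simp
    have w : ∑ J, R J * ∑ j, (theta V L J j - x j) ^ 2
        = (1 / N) ^ 2 * ∑ j, ∑ J, R J * (∑ l, (L * V (J l) j - x j)) ^ 2 := by
      simp_rw [y]
      rw [Finset.sum_comm, Finset.mul_sum]
      refine Finset.sum_congr rfl fun J _ => ?_
      rw [Finset.mul_sum, Finset.mul_sum]
      refine Finset.sum_congr rfl fun i _ => by ring
    rw [w]
    have u : ∀ j, ∑ J, R J * (∑ l, (L * V (J l) j - x j)) ^ 2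
        = N * ∑ ω, ρ ω * (L * V ω j - x j) ^ 2 := fun j =>
      pe_var ρ hs (fun ω => L * V ω j - x j) (z j)
    simp_rw [u]
    have v : ∀ j, ∑ ω, ρ ω * (L * V ω j - x j) ^ 2 ≤ ∑ ω, ρ ω * (L ^ 2 * V ω j ^ 2) := by
      intro j
      have : ∑ ω, ρ ω * (L * V ω j - x j) ^ 2 = ∑ ω, ρ ω * (L ^ 2 * V ω j ^ 2)
          - 2 * x j * ∑ ω, ρ ω * (L * V ω j) + x j ^ 2 * ∑ ω, ρ ω := by
        rw [Finset.mul_sum, Finset.mul_sum, ← Finset.sum_sub_distrib, ← Finset.sum_add_distrib]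
        refine Finset.sum_congr rfl fun i _ => by ring
      rw [this, hm, hs]
      nlinarith [sq_nonneg (x j)]
    calc (1 / N : ℝ) ^ 2 * ∑ j, N * ∑ ω, ρ ω * (L * V ω j - x j) ^ 2
        ≤ (1 / N : ℝ) ^ 2 * ∑ j, N * ∑ ω, ρ ω * (L ^ 2 * V ω j ^ 2) := by
          refine mul_le_mul_of_nonneg_left ?_ (by positivity)
          exact Finset.sum_le_sum fun j _ => mul_le_mul_of_nonneg_left (v j) hN'.le
      _ = (L ^ 2 / N) * ∑ ω, ρ ω * ∑ j, V ω j ^ 2 := by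
          rw [← Finset.mul_sum, Finset.sum_comm, Finset.mul_sum, Finset.mul_sum, Finset.mul_sum]
          refine Finset.sum_congr rfl fun ω _ => ?_
          rw [← Finset.mul_sum, ← Finset.mul_sum]
          field_simp
      _ ≤ (L ^ 2 / N) * ∑ ω, ρ ω * 1 := by
          gcongr with ω _
          · exact hρ ω
          · exact hV ω
      _ ≤ 1 / 250 := by
          simp only [mul_one, hs]
          rw [div_le_iff₀ hN']
          linarith
  -- pointwise log bound
  have p : ∀ J : Fin N → Ω, Real.log 2 * (1 - 4 * ∑ j, (theta V L J j - x j) ^ 2)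
      ≤ Real.log (1 + 2 * (2 * ∑ j, theta V L J j ^ 2)) := by
    intro J
    have s0 : 0 ≤ ∑ j, theta V L J j ^ 2 := Finset.sum_nonneg fun j _ => sq_nonneg _
    have s1 : 0 ≤ ∑ j, (theta V L J j - x j) ^ 2 := Finset.sum_nonneg fun j _ => sq_nonneg _
    by_cases h : 1 / 4 ≤ ∑ j, (theta V L J j - x j) ^ 2
    · have : 0 ≤ Real.log (1 + 2 * (2 * ∑ j, theta V L J j ^ 2)) :=
        Real.log_nonneg (by linarith)
      nlinarith
    · have : 1 ≤ 2 * (∑ j, theta V L J j ^ 2) + 2 * ∑ j, (theta V L J j - x j) ^ 2 := by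
        rw [← hx, Finset.mul_sum, Finset.mul_sum, ← Finset.sum_add_distrib]
        refine Finset.sum_le_sum fun j _ => ?_
        nlinarith [sq_nonneg (2 * theta V L J j - x j)]
      have : Real.log 2 ≤ Real.log (1 + 2 * (2 * ∑ j, theta V L J j ^ 2)) :=
        Real.log_le_log (by norm_num) (by linarith)
      nlinarith
  have q : ∑ J, R J * fexp V L A J ≥ -2 * (2 * n / 250)
      + (n / 2 : ℝ) * (Real.log 2 * (1 - 4 * (1 / 250))) := by
    have : ∑ J, R J * fexp V L A J ≥ ∑ J, R J *
        (-2 * ∑ i, (∑ j, A i j * theta V L J j) ^ 2 + (n / 2 : ℝ) * (Real.log 2 *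
          (1 - 4 * ∑ j, (theta V L J j - x j) ^ 2))) := by
      refine Finset.sum_le_sum fun J _ => mul_le_mul_of_nonneg_left ?_ (hR0 J)
      unfold fexp
      have := mul_le_mul_of_nonneg_left (p J) (by positivity : (0 : ℝ) ≤ n / 2)
      linarith
    refine le_trans ?_ this
    have e : ∑ J, R J *
        (-2 * ∑ i, (∑ j, A i j * theta V L J j) ^ 2 + (n / 2 : ℝ) * (Real.log 2 *
          (1 - 4 * ∑ j, (theta V L J j - x j) ^ 2)))
        = -2 * ∑ J, R J * ∑ i, (∑ j, A i j * theta V L J j) ^ 2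
          + (n / 2 : ℝ) * (Real.log 2 * (∑ J, R J
            - 4 * ∑ J, R J * ∑ j, (theta V L J j - x j) ^ 2)) := by
      simp only [Finset.mul_sum (Finset.univ : Finset (Fin N → Ω)), ← Finset.sum_sub_distrib,
        ← Finset.sum_add_distrib]
      refine Finset.sum_congr rfl fun J _ => by ring
    rw [e, hRs]
    have : (n / 2 : ℝ) * (Real.log 2 * (1 - 4 * (1 / 250))) ≤ (n / 2 : ℝ) * (Real.log 2 *
        (1 - 4 * ∑ J, R J * ∑ j, (theta V L J j - x j) ^ 2)) := by
      gcongr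
    linarith
  nlinarith

/-- signed unit vectors and zero -/
def Vv {m : ℕ} : Option (Fin m × Bool) → Fin m → ℝ
  | none => fun _ => 0
  | some (j, b) => fun i => if i = j then (if b then 1 else -1) else 0

/-- prior -/
noncomputable def pri {m : ℕ} (w : Fin m → ℝ) : Option (Fin m × Bool) → ℝ
  | none => 1 / 3
  | some (j, _) => w j / 6

/-- posterior -/
noncomputable def pos {m : ℕ} (x : Fin m → ℝ) (L : ℝ) : Option (Fin m × Bool) → ℝ
  | none => 1 - (∑ j, |x j|) / L
  | some (j, b) => max (if b then x j else -x j) 0 / L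

lemma Vv_sq {m : ℕ} (ω : Option (Fin m × Bool)) : ∑ j, Vv ω j ^ 2 ≤ 1 := by
  rcases ω with _ | ⟨j, b⟩
  · simp [Vv]
  · cases b <;> simp [Vv, ite_pow]

lemma pri_pos {m : ℕ} (w : Fin m → ℝ) (hw : ∀ j, 0 < w j) (ω) : 0 < pri w ω := by
  rcases ω with _ | ⟨j, b⟩
  · simp [pri]
  · have := hw j
    simp only [pri]; positivity

lemma pri_sum {m : ℕ} (w : Fin m → ℝ) (hw : ∑ j, w j ≤ 2) : ∑ ω, pri w ω ≤ 1 := by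
  rw [Fintype.sum_option, Fintype.sum_prod_type]
  simp only [pri, Fintype.sum_bool]
  have : ∑ j, (w j / 6 + w j / 6) = (∑ j, w j) / 3 := by
    rw [Finset.sum_div]
    refine Finset.sum_congr rfl fun j _ => by ring
  rw [this]
  linarith

lemma max_abs (t : ℝ) : max t 0 + max (-t) 0 = |t| := by
  rcases le_total 0 t with h | h
  · rw [max_eq_left h, max_eq_right (by linarith), abs_of_nonneg h, add_zero]
  · rw [max_eq_right h, max_eq_left (by linarith), abs_of_nonpos h, zero_add]

lemma pos_nonneg' {m : ℕ} (x : Fin m → ℝ) (L : ℝ) (hL : 0 < L) (hx : ∑ j, |x j| ≤ L) (ω) :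
    0 ≤ pos x L ω := by
  rcases ω with _ | ⟨j, b⟩
  · simp only [pos]
    have := (div_le_one hL).2 hx
    linarith
  · simp only [pos]
    exact div_nonneg (le_max_right _ _) hL.le

lemma pos_sum {m : ℕ} (x : Fin m → ℝ) (L : ℝ) : ∑ ω, pos x L ω = 1 := by
  rw [Fintype.sum_option, Fintype.sum_prod_type]
  simp only [pos, Fintype.sum_bool, if_true, Bool.false_eq_true, if_false, ← add_div, max_abs]
  rw [Finset.sum_div]
  ring

lemma pos_mean {m : ℕ} (x : Fin m → ℝ) (L : ℝ) (hL : 0 < L) (i : Fin m) :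
    ∑ ω, pos x L ω * (L * Vv ω i) = x i := by
  rw [Fintype.sum_option, Fintype.sum_prod_type]
  simp only [pos, Vv, Fintype.sum_bool, if_true, Bool.false_eq_true, if_false, mul_zero, zero_add]
  rw [Finset.sum_eq_single i]
  · simp only [if_true]
    have : max (x i) 0 - max (-x i) 0 = x i := by
      rcases le_total 0 (x i) with h | h
      · rw [max_eq_left h, max_eq_right (by linarith), sub_zero]
      · rw [max_eq_right h, max_eq_left (by linarith)]; ring
    field_simp
    linarith
  · intro j _ hj
    simp [hj.symm]
  · simp

lemma pos_kl {m : ℕ} (x w : Fin m → ℝ) (L : ℝ) (hL : 0 < L) (hx : ∑ j, |x j| ≤ L)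
    (hw : ∀ j, 0 < w j) :
    ∑ ω, pos x L ω * Real.log (pos x L ω / pri w ω)
      ≤ Real.log 6 + ∑ j, |x j| / L * Real.log (|x j| / L / w j) := by
  have h6 : 0 ≤ Real.log 6 := Real.log_nonneg (by norm_num)
  have key : ∀ t v : ℝ, 0 ≤ t → 0 < v →
      t * Real.log (t / (v / 6)) = t * Real.log 6 + t * Real.log (t / v) := by
    intro t v ht hv
    rcases ht.eq_or_lt with h | h
    · rw [← h]; simp
    · rw [← mul_add, ← Real.log_mul (by norm_num) (div_pos h hv).ne']
      congr 2
      field_simp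
  rw [Fintype.sum_option, Fintype.sum_prod_type]
  have h0 := pos_nonneg' x L hL hx none
  have s1 : ∀ j, ∑ b, pos x L (some (j, b)) * Real.log (pos x L (some (j, b)) / pri w (some (j, b)))
      = |x j| / L * Real.log 6 + |x j| / L * Real.log (|x j| / L / w j) := by
    intro j
    rw [← key _ _ (div_nonneg (abs_nonneg _) hL.le) (hw j)]
    simp only [pos, pri, Fintype.sum_bool, if_true, Bool.false_eq_true, if_false]
    rcases le_total 0 (x j) with h | h
    · rw [max_eq_left h, max_eq_right (a := - x j) (by linarith), abs_of_nonneg h]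
      simp
    · rw [max_eq_right h, max_eq_left (a := - x j) (by linarith), abs_of_nonpos h]
      simp
  simp_rw [s1]
  rw [Finset.sum_add_distrib, ← Finset.sum_mul, ← Finset.sum_div]
  have s0 : pos x L none * Real.log (pos x L none / pri w none) ≤ pos x L none * Real.log 6 := by
    rcases h0.eq_or_lt with h | h
    · rw [← h]; simp
    · refine mul_le_mul_of_nonneg_left ?_ h0
      apply Real.log_le_log (div_pos h (pri_pos w hw none))
      have : pos x L none ≤ 1 := by
        simp only [pos]
        have : 0 ≤ (∑ j, |x j|) / L :=
          div_nonneg (Finset.sum_nonneg fun j _ => abs_nonneg _) hL.le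
        linarith
      simp only [pri]
      rw [div_le_iff₀ (by norm_num)]
      linarith
  have e : pos x L none * Real.log 6 + (∑ j, |x j|) / L * Real.log 6 = Real.log 6 := by
    simp only [pos]; ring
  linarith

lemma scal {m : ℕ} (p : ℝ≥0∞) (hp : 1 < p) (α : Fin m → ℝ) (hα : lpnorm p α ≤ 1) :
    1 ≤ pstar p ∧ ∃ φ : Fin m → ℝ, (∀ j, 0 ≤ φ j) ∧ ∑ j, φ j ≤ 1 ∧
      ∀ j τ, 0 < τ → |α j| * τ ≤ (1 - 1 / pstar p) * φ j + τ ^ pstar p / pstar p ∧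
        |α j| * τ * Real.log (|α j| * τ ^ (1 - pstar p)) ≤ (pstar p - 1) * φ j := by
  by_cases h : p = ∞
  · subst h
    have hq : pstar ∞ = 1 := by simp [pstar]
    rw [hq]
    refine ⟨le_rfl, fun _ => 0, fun _ => le_rfl, by simp, ?_⟩
    intro j τ hτ
    simp only [lpnorm, if_true] at hα
    have h1 : |α j| ≤ 1 := (le_ciSup (f := fun j => |α j|) (Set.finite_range _).bddAbove j).trans hα
    constructor
    · simp only [mul_zero, zero_add, Real.rpow_one, div_one]
      exact mul_le_of_le_one_left hτ.le h1
    · simp only [mul_zero, sub_self, Real.rpow_zero, mul_one]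
      exact mul_nonpos_of_nonneg_of_nonpos (by positivity)
        (Real.log_nonpos (abs_nonneg _) h1)
  · set P := p.toReal with hP
    have hP1 : 1 < P := by
      rw [hP, ← ENNReal.toReal_one]
      exact (ENNReal.toReal_lt_toReal (by simp) h).2 hp
    have hconj : P.HolderConjugate (pstar p) := by
      rw [Real.holderConjugate_iff]
      refine ⟨hP1, ?_⟩
      simp only [pstar, inv_inv, ← hP]
      rw [one_div]; ring
    set q := pstar p with hq
    have hq1 : 1 < q := hconj.symm.lt
    refine ⟨hq1.le, fun j => |α j| ^ P, fun j => by positivity, ?_, ?_⟩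
    · simp only [lpnorm, h, if_false, ← hP] at hα
      have h0 : 0 ≤ ∑ j, |α j| ^ P := Finset.sum_nonneg fun j _ => by positivity
      by_contra hc
      push Not at hc
      have := Real.one_lt_rpow hc (by positivity : 0 < 1 / P)
      linarith
    · intro j τ hτ
      have hPi : 1 - 1 / q = 1 / P := by
        have := hconj.inv_add_inv_eq_one
        simp only [one_div]; linarith
      constructor
      · have := Real.young_inequality_of_nonneg (abs_nonneg (α j)) hτ.le hconj
        rw [hPi]
        calc _ ≤ _ := this
          _ = _ := by ring
      · rcases (abs_nonneg (α j)).eq_or_lt with h0 | h0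
        · have : 0 ≤ (q - 1) * |α j| ^ P := by
            apply mul_nonneg (by linarith); positivity
          rw [← h0] at this ⊢
          simpa [← h0] using this
        · set a := |α j|
          set v := a * τ ^ (1 - q) with hv
          have hvp : 0 < v := by positivity
          have hPq : (P - 1) * (q - 1) = 1 := by
            have e1 := hconj.inv_add_inv_eq_one
            have : 0 < P := by linarith
            have : 0 < q := by linarith
            field_simp at e1
            linarith
          have l1 : Real.log v ≤ (q - 1) * v ^ (P - 1) := by
            have := Real.log_le_self (Real.rpow_nonneg hvp.le (P - 1))
            rw [Real.log_rpow hvp] at this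
            calc Real.log v = (q - 1) * ((P - 1) * Real.log v) := by
                  linear_combination (-Real.log v) * hPq
              _ ≤ _ := mul_le_mul_of_nonneg_left this (by linarith)
          have l2 : a * τ * v ^ (P - 1) = a ^ P := by
            rw [hv, Real.mul_rpow h0.le (by positivity), ← Real.rpow_mul hτ.le]
            have : (1 - q) * (P - 1) = -1 := by linarith
            rw [this, Real.rpow_neg_one, Real.rpow_sub_one h0.ne']
            field_simp
          calc a * τ * Real.log v ≤ a * τ * ((q - 1) * v ^ (P - 1)) :=
                mul_le_mul_of_nonneg_left l1 (by positivity)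
            _ = (q - 1) * (a * τ * v ^ (P - 1)) := by ring
            _ = _ := by rw [l2]

/-- prior weights -/
noncomputable def wt {m : ℕ} (k : ℕ) (q S : ℝ) (σ : Fin m → ℝ) (j : Fin m) : ℝ :=
  if k ≤ (j : ℕ) + 1 then σ j ^ q / S else 1 / k

lemma card_head (m k : ℕ) :
    ((Finset.univ.filter fun j : Fin m => ¬ k ≤ (j : ℕ) + 1).card : ℝ) ≤ k := by
  have : (Finset.univ.filter fun j : Fin m => ¬ k ≤ (j : ℕ) + 1).card ≤ (Finset.range k).card := by
    apply Finset.card_le_card_of_injOn (fun j : Fin m => (j : ℕ))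
    · intro j hj
      simp at hj ⊢
      omega
    · intro a _ b _ hab
      exact Fin.ext hab
  rw [Finset.card_range] at this
  exact_mod_cast this

lemma wt_sum {m : ℕ} (k : ℕ) (hk : 0 < k) (q S : ℝ) (σ : Fin m → ℝ)
    (hS : S = ∑ j : Fin m, if k ≤ (j : ℕ) + 1 then σ j ^ q else 0) (hS0 : 0 < S) :
    ∑ j, wt k q S σ j ≤ 2 := by
  unfold wt
  rw [Finset.sum_ite, Finset.sum_const, ← Finset.sum_div]
  rw [← Finset.sum_filter] at hS
  rw [← hS, div_self hS0.ne', nsmul_eq_mul, mul_one_div]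
  have hk' : (0 : ℝ) < k := by exact_mod_cast hk
  have := (div_le_one hk').2 (card_head m k)
  linarith

lemma final_det (n m k : ℕ) (hn : 0 < n) (hk : 0 < k) (q : ℝ) (hq : 1 ≤ q)
    (σ : Fin m → ℝ) (hσ : ∀ j, 0 < σ j) (S T : ℝ)
    (hS : S = ∑ j : Fin m, if k ≤ (j : ℕ) + 1 then σ j ^ q else 0) (hS0 : 0 < S)
    (hT : T = S ^ (1 / q))
    (x φ : Fin m → ℝ) (hφ : ∀ j, 0 ≤ φ j) (hφs : ∑ j, φ j ≤ 1)
    (hφ1 : ∀ j τ, 0 < τ → |x j / σ j| * τ ≤ (1 - 1 / q) * φ j + τ ^ q / q)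
    (hφ2 : ∀ j τ, 0 < τ → |x j / σ j| * τ * Real.log (|x j / σ j| * τ ^ (1 - q)) ≤ (q - 1) * φ j)
    (r : ℝ) (hr : 0 < r) (hxr : ∑ j, x j ^ 2 = r ^ 2) (hTr : T ≤ r * √k)
    (hqn : q ≤ n / 60000) (hkq : k * q ≤ n / 30000)
    (A : Fin n → Fin m → ℝ) (hA : ∀ i, ∑ j, A i j * x j = 0)
    (h1 : A ∈ good1 (1000 * k) n m (pri (wt k q S σ)) Vv (2 * √k))
    (h2 : A ∈ good2 n m (pri (wt k q S σ)) Vv) : False := by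
  have hk' : (0 : ℝ) < k := by exact_mod_cast hk
  have hsk : 0 < √(k : ℝ) := Real.sqrt_pos.2 hk'
  have hsk2 : √(k : ℝ) ^ 2 = k := Real.sq_sqrt hk'.le
  have hT0 : 0 < T := by rw [hT]; positivity
  have hTq : T ^ q = S := by
    rw [hT, ← Real.rpow_mul hS0.le, one_div_mul_cancel (by linarith), Real.rpow_one]
  have hw : ∀ j, 0 < wt k q S σ j := by
    intro j
    unfold wt
    have := hσ j
    split_ifs <;> positivity
  set y : Fin m → ℝ := fun j => x j / r with hy
  have hy1 : ∑ j, y j ^ 2 = 1 := by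
    simp only [hy, div_pow]
    rw [← Finset.sum_div, hxr, div_self (by positivity)]
  have hyA : ∀ i, ∑ j, A i j * y j = 0 := by
    intro i
    have : ∑ j, A i j * y j = (∑ j, A i j * x j) / r := by
      rw [Finset.sum_div]
      refine Finset.sum_congr rfl fun j _ => by simp only [hy]; ring
    rw [this, hA, zero_div]
  set τ : Fin m → ℝ := fun j => σ j / T with hτ
  have hτ0 : ∀ j, 0 < τ j := fun j => div_pos (hσ j) hT0
  have hτq : ∀ j, τ j ^ q = σ j ^ q / S := by
    intro j
    rw [hτ, Real.div_rpow (hσ j).le hT0.le, hTq]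
  set tl := Finset.univ.filter fun j : Fin m => k ≤ (j : ℕ) + 1 with htl
  set hd := Finset.univ.filter fun j : Fin m => ¬ k ≤ (j : ℕ) + 1 with hhd
  have hyt : ∀ j, |y j| = T / r * (|x j / σ j| * τ j) := by
    intro j
    have := hσ j
    simp only [hy, hτ, abs_div, abs_of_pos hr, abs_of_pos this]
    field_simp
  have hφt : ∑ j ∈ tl, φ j ≤ 1 :=
    (Finset.sum_le_univ_sum_of_nonneg hφ).trans hφs
  have hτs : ∑ j ∈ tl, τ j ^ q = 1 := by
    simp_rw [hτq]
    rw [← Finset.sum_div, Finset.sum_filter, ← hS, div_self hS0.ne']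
  have hTk : T / r ≤ √k := by rw [div_le_iff₀ hr]; linarith
  have htail : ∑ j ∈ tl, |y j| ≤ √k := by
    simp_rw [hyt]
    rw [← Finset.mul_sum]
    have : ∑ j ∈ tl, |x j / σ j| * τ j ≤ 1 := by
      calc _ ≤ ∑ j ∈ tl, ((1 - 1 / q) * φ j + τ j ^ q / q) :=
            Finset.sum_le_sum fun j _ => hφ1 j _ (hτ0 j)
        _ = (1 - 1 / q) * ∑ j ∈ tl, φ j + 1 / q := by
            rw [Finset.sum_add_distrib, ← Finset.mul_sum, ← Finset.sum_div, hτs]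
        _ ≤ (1 - 1 / q) * 1 + 1 / q := by
            gcongr
            rw [sub_nonneg, div_le_one (by linarith)]; exact hq
        _ = 1 := by ring
    calc _ ≤ T / r * 1 := mul_le_mul_of_nonneg_left this (by positivity)
      _ ≤ _ := by linarith
  have hhead : ∑ j ∈ hd, |y j| ≤ √k := by
    apply Real.le_sqrt_of_sq_le
    have c1 := sq_sum_le_card_mul_sum_sq (s := hd) (f := fun j => |y j|)
    simp only [sq_abs] at c1
    have c2 : ∑ j ∈ hd, y j ^ 2 ≤ 1 := by
      rw [← hy1]; exact Finset.sum_le_univ_sum_of_nonneg fun j => sq_nonneg _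
    have c3 : 0 ≤ ∑ j ∈ hd, y j ^ 2 := Finset.sum_nonneg fun j _ => sq_nonneg _
    calc _ ≤ _ := c1
      _ ≤ (k : ℝ) * 1 := mul_le_mul (card_head m k) c2 c3 hk'.le
      _ = k := mul_one _
  set L := 2 * √(k : ℝ) with hL
  have hL0 : 0 < L := by positivity
  have hsplit : ∀ f : Fin m → ℝ, ∑ j, f j = ∑ j ∈ tl, f j + ∑ j ∈ hd, f j := fun f =>
    (Finset.sum_filter_add_sum_filter_not _ _ _).symm
  have hyL : ∑ j, |y j| ≤ L := by
    rw [hsplit]; linarith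
  have hkl := pos_kl y (wt k q S σ) L hL0 hyL hw
  have kh : ∑ j ∈ hd, |y j| / L * Real.log (|y j| / L / wt k q S σ j) ≤ 1 / 4 := by
    calc _ ≤ ∑ j ∈ hd, y j ^ 2 * (1 / 4) := by
          refine Finset.sum_le_sum fun j hj => ?_
          have hj' : ¬ k ≤ (j : ℕ) + 1 := (Finset.mem_filter.1 hj).2
          have hwj : wt k q S σ j = 1 / k := by simp [wt, hj']
          rw [hwj]
          have : Real.log (|y j| / L / (1 / k)) ≤ |y j| / L / (1 / k) :=
            Real.log_le_self (by positivity)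
          calc _ ≤ |y j| / L * (|y j| / L / (1 / k)) :=
                mul_le_mul_of_nonneg_left this (by positivity)
            _ = |y j| ^ 2 * (k / L ^ 2) := by field_simp
            _ = _ := by
                rw [sq_abs, hL, mul_pow, hsk2]
                field_simp
                norm_num
      _ ≤ 1 / 4 := by
          rw [← Finset.sum_mul]
          have : ∑ j ∈ hd, y j ^ 2 ≤ 1 := by
            rw [← hy1]; exact Finset.sum_le_univ_sum_of_nonneg fun j => sq_nonneg _
          linarith
  have hκ : T / r / L ≤ 1 / 2 := by
    rw [div_le_iff₀ hL0]; linarith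
  have hκ0 : 0 < T / r / L := by positivity
  have kt : ∑ j ∈ tl, |y j| / L * Real.log (|y j| / L / wt k q S σ j) ≤ (q - 1) / 2 := by
    calc _ ≤ ∑ j ∈ tl, (q - 1) / 2 * φ j := by
          refine Finset.sum_le_sum fun j hj => ?_
          have hj' : k ≤ (j : ℕ) + 1 := (Finset.mem_filter.1 hj).2
          have hwj : wt k q S σ j = τ j ^ q := by rw [hτq]; simp [wt, hj']
          have h1q : 0 ≤ (q - 1) * φ j := mul_nonneg (by linarith) (hφ j)
          rw [hwj, hyt]
          have h2 := hφ2 j _ (hτ0 j)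
          set a := |x j / σ j| with ha
          rcases (abs_nonneg (x j / σ j)).eq_or_lt with h0 | h0
          · rw [ha, ← h0]
            simp
            nlinarith
          · rw [← ha] at h0
            have ht := hτ0 j
            have e : T / r * (a * τ j) / L / τ j ^ q = T / r / L * (a * τ j ^ (1 - q)) := by
              rw [Real.rpow_sub ht, Real.rpow_one]
              field_simp
            have l : Real.log (T / r * (a * τ j) / L / τ j ^ q)
                ≤ Real.log (a * τ j ^ (1 - q)) := by
              rw [e]
              apply Real.log_le_log (by positivity)
              exact mul_le_of_le_one_left (by positivity) (by linarith)
            calc _ ≤ T / r * (a * τ j) / L * Real.log (a * τ j ^ (1 - q)) :=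
                  mul_le_mul_of_nonneg_left l (by positivity)
              _ = T / r / L * (a * τ j * Real.log (a * τ j ^ (1 - q))) := by ring
              _ ≤ T / r / L * ((q - 1) * φ j) := mul_le_mul_of_nonneg_left h2 hκ0.le
              _ ≤ 1 / 2 * ((q - 1) * φ j) := mul_le_mul_of_nonneg_right hκ h1q
              _ = _ := by ring
      _ ≤ (q - 1) / 2 * 1 := by
          rw [← Finset.mul_sum]
          exact mul_le_mul_of_nonneg_left hφt (by linarith)
      _ = _ := mul_one _
  have h6 : Real.log 6 ≤ 2.1 := by
    have : Real.log 6 ≤ Real.log (2 ^ 3) := Real.log_le_log (by norm_num) (by norm_num)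
    rw [Real.log_pow] at this
    have := Real.log_two_lt_d9
    push_cast at *
    linarith
  rw [hsplit] at hkl
  refine det_core (1000 * k) n m hn (by positivity) (pri (wt k q S σ)) (pri_pos _ hw) Vv Vv_sq L A
    h1 h2 y hy1 hyA (pos y L) (pos_nonneg' y L hL0 hyL) (pos_sum y L) (pos_mean y L hL0) (3 * q)
    ?_ ?_ ?_ ?_
  · linarith
  · linarith
  · push_cast
    linarith
  · rw [hL, mul_pow, hsk2]
    push_cast
    linarith

/-- For `1 < p ≤ ∞`, with probability at least `1 - c₁ exp(-c₂ n)` the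
circumradius of the section of the `ℓ_p`-ellipsoid with the kernel of a Gaussian random matrix
is at most `C √(p*) n^{-1/2} (∑_{j=k}^m σ_j^{p*})^{1/p*}` with `k = max(1, ⌈c n / p*⌉)`.
(Here `σ : Fin m → ℝ` is 0-indexed, i.e. `σ ⟨j-1⟩` is the paper's `σ_j`.) -/
theorem statement0 :
    ∃ C c c₁ c₂ : ℝ, 0 < C ∧ 0 < c ∧ 0 < c₁ ∧ 0 < c₂ ∧
      ∀ (p : ℝ≥0∞), 1 < p →
      ∀ (m n : ℕ), 1 ≤ n → n < m →
      ∀ σ : Fin m → ℝ, (∀ j, 0 < σ j) → (∀ i j : Fin m, i ≤ j → σ j ≤ σ i) →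
      ENNReal.ofReal (1 - c₁ * Real.exp (-c₂ * n)) ≤
        gaussianMatrix n m {A |
          radq 2 (ellipsoid p σ) (kerSet A) ≤
            C * Real.sqrt (pstar p) * (n : ℝ) ^ (-(1 / 2 : ℝ)) *
              (∑ j : Fin m,
                  if max 1 ⌈c * n / pstar p⌉₊ ≤ (j : ℕ) + 1 then σ j ^ pstar p else 0) ^
                (1 / pstar p)} := by
  refine ⟨300, 1 / 60000, 2, 1 / 20, by norm_num, by norm_num, by norm_num, by norm_num, ?_⟩
  intro p hp m n hn hnm σ hσ hmono
  have hn' : (1 : ℝ) ≤ n := by exact_mod_cast hn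
  have hq : 1 ≤ pstar p := by
    refine (scal (m := 1) p hp (fun _ => 0) ?_).1
    unfold lpnorm
    split_ifs with h
    · simp
    · have : p.toReal ≠ 0 := by
        rw [ENNReal.toReal_ne_zero]
        exact ⟨(zero_lt_one.trans hp).ne', h⟩
      simp [Real.zero_rpow this, Real.zero_rpow (inv_ne_zero this)]
  set q := pstar p with hqdef
  have hq0 : 0 < q := by linarith
  set k := max 1 ⌈1 / 60000 * (n : ℝ) / q⌉₊ with hkdef
  set S := ∑ j : Fin m, if k ≤ (j : ℕ) + 1 then σ j ^ q else 0 with hS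
  have hl2 : ∀ x : Fin m → ℝ, lpnorm 2 x = √(∑ j, x j ^ 2) := by
    intro x
    simp [lpnorm, Real.sqrt_eq_rpow]
  have hkpos : 0 < k := lt_of_lt_of_le one_pos (le_max_left _ _)
  have hkge : 1 / 60000 * (n : ℝ) / q ≤ k :=
    (Nat.le_ceil _).trans (by exact_mod_cast le_max_right _ _)
  have hkm : k ≤ m := by
    apply max_le (by omega)
    apply Nat.ceil_le.2
    have : (n : ℝ) ≤ m := by exact_mod_cast hnm.le
    rw [div_le_iff₀ hq0]
    nlinarith
  have hterm : ∀ j : Fin m, 0 ≤ (if k ≤ (j : ℕ) + 1 then σ j ^ q else 0) := by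
    intro j
    have := hσ j
    split_ifs <;> positivity
  have hS0 : 0 < S := by
    refine Finset.sum_pos' (fun j _ => hterm j) ⟨⟨m - 1, by omega⟩, Finset.mem_univ _, ?_⟩
    have : k ≤ m - 1 + 1 := by omega
    simp only [this, if_true]
    exact Real.rpow_pos_of_pos (hσ _) _
  set T := S ^ (1 / q) with hT
  have hT0 : 0 < T := Real.rpow_pos_of_pos hS0 _
  have hnn : (n : ℝ) ^ (-(1 / 2 : ℝ)) = (√n)⁻¹ := by
    rw [Real.rpow_neg (by positivity), Real.sqrt_eq_rpow]
  have hsn : 0 < √(n : ℝ) := Real.sqrt_pos.2 (by linarith)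
  rw [hnn]
  have hB : 0 ≤ 300 * √q * (√(n : ℝ))⁻¹ * T := by positivity
  have hkk : 1 ≤ 300 * √q * (√(n : ℝ))⁻¹ * √(k : ℝ) := by
    have : √(n : ℝ) ≤ 300 * (√q * √(k : ℝ)) := by
      rw [← Real.sqrt_mul hq0.le]
      apply Real.sqrt_le_iff.2
      refine ⟨by positivity, ?_⟩
      rw [mul_pow, Real.sq_sqrt (by positivity)]
      rw [div_le_iff₀ hq0] at hkge
      nlinarith
    calc (1 : ℝ) = √(n : ℝ) * (√(n : ℝ))⁻¹ := (mul_inv_cancel₀ hsn.ne').symm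
      _ ≤ 300 * (√q * √(k : ℝ)) * (√(n : ℝ))⁻¹ := by gcongr
      _ = _ := by ring
  by_cases hsmall : 1 / 60000 * (n : ℝ) ≤ q
  · -- deterministic case
    have hk1 : k = 1 := by
      apply le_antisymm _ hkpos
      apply max_le le_rfl
      apply Nat.ceil_le.2
      rw [div_le_iff₀ hq0]
      simpa using hsmall
    have hall : {A : Fin n → Fin m → ℝ | radq 2 (ellipsoid p σ) (kerSet A) ≤
        300 * √q * (√(n : ℝ))⁻¹ * T} = Set.univ := by
      rw [Set.eq_univ_iff_forall]
      intro A
      apply Real.sSup_le _ hB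
      rintro _ ⟨x, ⟨hx, -⟩, rfl⟩
      obtain ⟨-, φ, hφ, hφs, h⟩ := scal p hp _ hx
      rw [← hqdef] at h
      rw [hl2]
      have hx1 : √(∑ j, x j ^ 2) ≤ ∑ j, |x j| := by
        apply Real.sqrt_le_iff.2
        refine ⟨Finset.sum_nonneg fun j _ => abs_nonneg _, ?_⟩
        have := Finset.sum_sq_le_sq_sum_of_nonneg (s := Finset.univ) (f := fun j => |x j|)
          (fun j _ => abs_nonneg _)
        simpa only [sq_abs] using this
      have hTq : T ^ q = S := by
        rw [hT, ← Real.rpow_mul hS0.le, one_div_mul_cancel (by linarith), Real.rpow_one]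
      have hSall : S = ∑ j, σ j ^ q := by
        rw [hS, hk1]; simp
      have hx2 : ∑ j, |x j| ≤ T := by
        have e : ∀ j, |x j| = T * (|x j / σ j| * (σ j / T)) := by
          intro j
          have := hσ j
          rw [abs_div, abs_of_pos this]
          field_simp
        simp_rw [e]
        rw [← Finset.mul_sum]
        have : ∑ j, |x j / σ j| * (σ j / T) ≤ 1 := by
          calc _ ≤ ∑ j, ((1 - 1 / q) * φ j + (σ j / T) ^ q / q) :=
                Finset.sum_le_sum fun j _ => (h j _ (div_pos (hσ j) hT0)).1
            _ = (1 - 1 / q) * ∑ j, φ j + 1 / q := by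
                rw [Finset.sum_add_distrib, ← Finset.mul_sum, ← Finset.sum_div]
                congr 2
                simp_rw [fun j => Real.div_rpow (hσ j).le hT0.le q, hTq]
                rw [← Finset.sum_div, ← hSall, div_self hS0.ne']
            _ ≤ (1 - 1 / q) * 1 + 1 / q := by
                gcongr
                rw [sub_nonneg, div_le_one (by linarith)]; exact hq
            _ = 1 := by ring
        exact mul_le_of_le_one_right hT0.le this
      rw [hk1] at hkk
      simp only [Nat.cast_one, Real.sqrt_one, mul_one] at hkk
      calc _ ≤ _ := hx1.trans hx2
        _ ≤ _ := le_mul_of_one_le_left hT0.le hkk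
    rw [hall]
    have hprob : IsProbabilityMeasure (gaussianMatrix n m) := by
      unfold gaussianMatrix; infer_instance
    rw [measure_univ]
    apply ENNReal.ofReal_le_one.2
    have := Real.exp_pos (-(1 / 20) * (n : ℝ))
    linarith
  · push Not at hsmall
    have hw : ∀ j, 0 < wt k q S σ j := by
      intro j
      unfold wt
      have := hσ j
      have : (0 : ℝ) < k := by exact_mod_cast hkpos
      split_ifs <;> positivity
    refine (event_prob (1000 * k) n m (pri (wt k q S σ)) (pri_pos _ hw)
      (pri_sum _ (wt_sum k hkpos q S σ hS hS0)) Vv Vv_sq (2 * √k)).trans (measure_mono ?_)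
    rintro A ⟨hA1, hA2⟩
    apply Real.sSup_le _ hB
    rintro _ ⟨x, ⟨hx, hker⟩, rfl⟩
    obtain ⟨-, φ, hφ, hφs, h⟩ := scal p hp _ hx
    rw [← hqdef] at h
    rw [hl2]
    by_contra hc
    push Not at hc
    have hr : 0 < √(∑ j, x j ^ 2) := lt_of_le_of_lt hB hc
    have hkq : k * q ≤ n / 30000 := by
      have h1 : (1 : ℝ) ≤ 1 / 60000 * (n : ℝ) / q := by
        rw [le_div_iff₀ hq0]; linarith
      have h2 : (k : ℝ) ≤ 1 / 60000 * (n : ℝ) / q + 1 := by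
        rw [hkdef, Nat.cast_max]
        apply max_le
        · simp only [Nat.cast_one]; linarith
        · exact (Nat.ceil_lt_add_one (by positivity)).le
      have h3 : (k : ℝ) ≤ 2 * (1 / 60000 * (n : ℝ) / q) := by linarith
      calc (k : ℝ) * q ≤ 2 * (1 / 60000 * (n : ℝ) / q) * q := by gcongr
        _ = n / 30000 := by field_simp; norm_num
    refine final_det n m k (by omega) hkpos q hq σ hσ S T hS hS0 hT x φ hφ hφs
      (fun j τ hτ => (h j τ hτ).1) (fun j τ hτ => (h j τ hτ).2) _ hr
      (Real.sq_sqrt (Finset.sum_nonneg fun j _ => sq_nonneg _)).symm ?_ (by linarith) hkq A hker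
      hA1 hA2
    calc T ≤ (300 * √q * (√(n : ℝ))⁻¹ * √(k : ℝ)) * T := le_mul_of_one_le_left hT0.le hkk
      _ = (300 * √q * (√(n : ℝ))⁻¹ * T) * √(k : ℝ) := by ring
      _ ≤ _ := by gcongr
end

section
/- Let 0 < p ≤ 1 and λ > 0, and set σ_j = j^{−λ} for j ∈ ℕ. There exist constants C, D, K ∈ (0,∞), with K depending only on p and λ, such that for all m ∈ ℕ and all 1 ≤ n < m satisfying n ≥ D·log(e·m/n), if G_{n,m} is an n×m random matrix with i.i.d. standard Gaussian entries, then with probability at least 1 − 2·exp(−C·n) one has rad(E^m_{p,σ}, ker G_{n,m}) ≤ K·(log(e·m/n)/n)^{λ + 1/p − 1/2}. -/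
open MeasureTheory ProbabilityTheory
open scoped ENNReal NNReal

lemma aux_row {m : ℕ} (y : Fin m → ℝ) (hy : ∑ j, y j ^ 2 = 1) :
    (Measure.pi fun _ : Fin m => gaussianReal 0 1).map (fun a => ∑ j, a j * y j)
      = gaussianReal 0 1 := by
  have hm : Measurable (fun a : Fin m → ℝ => ∑ j, a j * y j) := by fun_prop
  have := Measure.isProbabilityMeasure_map (μ := Measure.pi fun _ : Fin m => gaussianReal 0 1) hm.aemeasurable
  apply Measure.ext_of_charFun
  funext t
  rw [charFun_gaussianReal, charFun_apply_real, integral_map hm.aemeasurable (by fun_prop)]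
  have h1 : ∀ a : Fin m → ℝ, Complex.exp (t * ((∑ j, a j * y j : ℝ) : ℂ) * Complex.I)
      = ∏ j, Complex.exp (((t * y j : ℝ) : ℂ) * (a j : ℂ) * Complex.I) := by
    intro a
    rw [← Complex.exp_sum]
    congr 1
    push_cast
    rw [Finset.mul_sum, Finset.sum_mul]
    refine Finset.sum_congr rfl fun j _ => by ring
  simp_rw [h1]
  rw [integral_fintype_prod_eq_prod (f := fun j (x : ℝ) => Complex.exp (((t * y j : ℝ) : ℂ) * (x : ℂ) * Complex.I))]
  have h2 : ∀ j, ∫ x : ℝ, Complex.exp (((t * y j : ℝ) : ℂ) * (x : ℂ) * Complex.I) ∂gaussianReal 0 1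
      = Complex.exp (- (((t * y j)^2 / 2 : ℝ) : ℂ)) := by
    intro j
    rw [← charFun_apply_real, charFun_gaussianReal]
    congr 1
    push_cast
    simp
  simp_rw [h2]
  rw [← Complex.exp_sum]
  congr 1
  have : ∑ j, (t * y j)^2/2 = t^2/2 := by
    rw [← mul_one (t^2/2), ← hy, Finset.mul_sum]
    exact Finset.sum_congr rfl fun j _ => by ring
  rw [Finset.sum_neg_distrib, ← Complex.ofReal_sum, this]
  push_cast
  simp

lemma aux_mgf (t : ℝ) (ht : t < 1/2) :
    Integrable (fun x : ℝ => Real.exp (t * x^2)) (gaussianReal 0 1) ∧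
    ∫ x : ℝ, Real.exp (t * x^2) ∂gaussianReal 0 1 = (Real.sqrt (1 - 2*t))⁻¹ := by
  have key : ∀ x : ℝ, gaussianPDFReal 0 1 x * Real.exp (t * x^2)
      = (Real.sqrt (2 * Real.pi))⁻¹ * Real.exp (-(1/2 - t) * x^2) := by
    intro x
    simp only [gaussianPDFReal, NNReal.coe_one, mul_one, sub_zero]
    rw [mul_assoc, ← Real.exp_add]
    congr 2
    ring
  constructor
  · rw [gaussianReal_of_var_ne_zero _ one_ne_zero, gaussianPDF_def,
      integrable_withDensity_iff_integrable_smul' (by fun_prop) (by simp)]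
    simp only [ENNReal.toReal_ofReal (gaussianPDFReal_nonneg _ _ _), smul_eq_mul, key]
    exact (integrable_exp_neg_mul_sq (by linarith)).const_mul _
  · rw [integral_gaussianReal_eq_integral_smul one_ne_zero]
    simp only [smul_eq_mul, key]
    rw [integral_const_mul, integral_gaussian, ← Real.sqrt_inv, ← Real.sqrt_inv, ← Real.sqrt_mul (by positivity)]
    congr 1
    have : 1/2 - t ≠ 0 := by linarith
    have : 1 - 2*t ≠ 0 := by linarith
    have := Real.pi_ne_zero
    field_simp
    try ring

lemma aux_chernoff {n m : ℕ} (y : Fin m → ℝ) (hy : ∑ j, y j ^ 2 = 1) (t c : ℝ) (ht : t < 1/2) :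
    gaussianMatrix n m {A | c ≤ t * ∑ i, (∑ j, A i j * y j)^2}
      ≤ ENNReal.ofReal (Real.exp (-c) * (Real.sqrt (1 - 2*t))⁻¹ ^ n) := by
  set ν : Measure (Fin m → ℝ) := Measure.pi fun _ : Fin m => gaussianReal 0 1 with hν
  have hm : Measurable (fun a : Fin m → ℝ => ∑ j, a j * y j) := by fun_prop
  obtain ⟨h1, h2⟩ := aux_mgf t ht
  have hr := aux_row y hy
  have h3 : Integrable (fun a : Fin m → ℝ => Real.exp (t * (∑ j, a j * y j)^2)) ν := by
    rw [← hr] at h1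
    exact h1.comp_measurable hm
  have h4 : ∫ a : Fin m → ℝ, Real.exp (t * (∑ j, a j * y j)^2) ∂ν = (Real.sqrt (1 - 2*t))⁻¹ := by
    rw [← h2, ← hr, integral_map hm.aemeasurable (by fun_prop)]
  have h5 : ∀ A : Fin n → Fin m → ℝ, Real.exp (t * ∑ i, (∑ j, A i j * y j)^2)
      = ∏ i, Real.exp (t * (∑ j, A i j * y j)^2) := by
    intro A; rw [← Real.exp_sum, Finset.mul_sum]
  have h6 : Integrable (fun A : Fin n → Fin m → ℝ => Real.exp (t * ∑ i, (∑ j, A i j * y j)^2)) (gaussianMatrix n m) := by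
    simp_rw [h5]
    exact Integrable.fintype_prod (f := fun _ (a : Fin m → ℝ) => Real.exp (t * (∑ j, a j * y j)^2)) (fun i => h3)
  have h7 : ∫ A, Real.exp (t * ∑ i, (∑ j, A i j * y j)^2) ∂(gaussianMatrix n m) = (Real.sqrt (1 - 2*t))⁻¹ ^ n := by
    simp_rw [h5]
    rw [gaussianMatrix, integral_fintype_prod_eq_prod (f := fun _ (a : Fin m → ℝ) => Real.exp (t * (∑ j, a j * y j)^2))]
    simp [← hν, h4]
  have : IsProbabilityMeasure (gaussianMatrix n m) := by unfold gaussianMatrix; infer_instance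
  have h8 := mul_meas_ge_le_integral_of_nonneg (μ := gaussianMatrix n m)
    (f := fun A => Real.exp (t * ∑ i, (∑ j, A i j * y j)^2)) (Filter.Eventually.of_forall fun A => (Real.exp_pos _).le) h6 (Real.exp c)
  rw [h7] at h8
  have h9 : {A : Fin n → Fin m → ℝ | Real.exp c ≤ Real.exp (t * ∑ i, (∑ j, A i j * y j)^2)} = {A | c ≤ t * ∑ i, (∑ j, A i j * y j)^2} := by
    ext A; simp
  rw [h9] at h8
  rw [← ENNReal.ofReal_toReal (measure_ne_top (gaussianMatrix n m) _)]
  apply ENNReal.ofReal_le_ofReal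
  rw [Real.exp_neg, inv_mul_eq_div, le_div_iff₀ (Real.exp_pos _), mul_comm]
  exact h8

lemma aux_upper {n m : ℕ} (y : Fin m → ℝ) (hy : ∑ j, y j ^ 2 = 1) :
    gaussianMatrix n m {A | 9 * (n:ℝ) ≤ ∑ i, (∑ j, A i j * y j)^2} ≤ ENNReal.ofReal (Real.exp (-n)) := by
  have h := aux_chernoff (n := n) y hy (1/4) (9/4*n) (by norm_num)
  have e : {A : Fin n → Fin m → ℝ | 9/4*(n:ℝ) ≤ 1/4 * ∑ i, (∑ j, A i j * y j)^2} = {A | 9 * (n:ℝ) ≤ ∑ i, (∑ j, A i j * y j)^2} := by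
    ext A; simp only [Set.mem_ofPred_eq]; constructor <;> intro h <;> linarith
  rw [e] at h
  refine h.trans (ENNReal.ofReal_le_ofReal ?_)
  have h1 : (Real.sqrt (1 - 2*(1/4)))⁻¹ ≤ Real.exp 1 := by
    rw [← Real.sqrt_inv]
    have : Real.sqrt ((1 - 2*(1/4))⁻¹) ≤ 2 := by
      rw [Real.sqrt_le_left (by norm_num)]; norm_num
    have := Real.add_one_le_exp 1
    linarith
  calc _ ≤ Real.exp (-(9/4*n)) * (Real.exp 1)^n := by gcongr
    _ = Real.exp (-(5/4*n)) := by rw [← Real.exp_nat_mul, ← Real.exp_add]; congr 1; ring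
    _ ≤ _ := by apply Real.exp_le_exp.2; have : (0:ℝ) ≤ n := Nat.cast_nonneg n; linarith

lemma aux_lower {n m : ℕ} (y : Fin m → ℝ) (hy : ∑ j, y j ^ 2 = 1) :
    gaussianMatrix n m {A | ∑ i, (∑ j, A i j * y j)^2 ≤ n/25} ≤ ENNReal.ofReal (Real.exp (-n)) := by
  have h := aux_chernoff (n := n) y hy (-12) (-12*n/25) (by norm_num)
  have e : {A : Fin n → Fin m → ℝ | -12*(n:ℝ)/25 ≤ -12 * ∑ i, (∑ j, A i j * y j)^2} = {A | ∑ i, (∑ j, A i j * y j)^2 ≤ n/25} := by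
    ext A; simp only [Set.mem_ofPred_eq]; constructor <;> intro h <;> linarith
  rw [e] at h
  refine h.trans (ENNReal.ofReal_le_ofReal ?_)
  have h1 : (Real.sqrt (1 - 2*(-12)))⁻¹ ≤ Real.exp (-(3/2)) := by
    rw [Real.exp_neg]
    apply inv_anti₀ (Real.exp_pos _)
    apply Real.le_sqrt_of_sq_le
    rw [← Real.exp_nat_mul]
    have := Real.exp_one_lt_d9
    have e3 : Real.exp ((2:ℕ) * (3/2)) = Real.exp 1 ^ 3 := by rw [← Real.exp_nat_mul]; norm_num
    rw [e3]
    calc Real.exp 1 ^ 3 ≤ 2.8 ^ 3 := by gcongr; linarith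
      _ ≤ _ := by norm_num
  calc _ ≤ Real.exp (-(-12*n/25)) * (Real.exp (-(3/2)))^n := by gcongr
    _ = Real.exp (-(51/50*n)) := by rw [← Real.exp_nat_mul, ← Real.exp_add]; congr 1; ring
    _ ≤ _ := by apply Real.exp_le_exp.2; have : (0:ℝ) ≤ n := Nat.cast_nonneg n; linarith

section net
variable {E F : Type*} [NormedAddCommGroup E] [NormedSpace ℝ E] 
  [NormedAddCommGroup F] [NormedSpace ℝ F]
open Metric Module Function

lemma aux_card [FiniteDimensional ℝ E] (s : Finset E) (hs : ∀ c ∈ s, ‖c‖ ≤ 1)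
    (h : ∀ c ∈ s, ∀ d ∈ s, c ≠ d → 1/32 ≤ ‖c - d‖) : s.card ≤ 65 ^ finrank ℝ E := by
  borelize E
  let μ : Measure E := Measure.addHaar
  let δ : ℝ := (1 : ℝ) / 64
  let ρ : ℝ := (65 : ℝ) / 64
  have ρpos : 0 < ρ := by norm_num [ρ]
  set A := ⋃ c ∈ s, ball (c : E) δ with hA
  have D : Set.Pairwise (s : Set E) (Disjoint on fun c => ball (c : E) δ) := by
    rintro c hc d hd hcd
    apply ball_disjoint_ball
    rw [dist_eq_norm]
    have := h c hc d hd hcd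
    norm_num [δ] at *
    linarith
  have A_subset : A ⊆ ball (0 : E) ρ := by
    refine Set.iUnion₂_subset fun x hx => ?_
    apply ball_subset_ball'
    rw [dist_zero_right]
    have := hs x hx
    norm_num [δ, ρ]
    linarith
  have I :
    (s.card : ℝ≥0∞) * ENNReal.ofReal (δ ^ finrank ℝ E) * μ (ball 0 1) ≤
      ENNReal.ofReal (ρ ^ finrank ℝ E) * μ (ball 0 1) :=
    calc
      (s.card : ℝ≥0∞) * ENNReal.ofReal (δ ^ finrank ℝ E) * μ (ball 0 1) = μ A := by
        rw [hA, measure_biUnion_finset D fun c _ => measurableSet_ball]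
        have I : 0 < δ := by norm_num [δ]
        simp only [μ.addHaar_ball_of_pos _ I]
        simp only [Finset.sum_const, nsmul_eq_mul, mul_assoc]
      _ ≤ μ (ball (0 : E) ρ) := measure_mono A_subset
      _ = ENNReal.ofReal (ρ ^ finrank ℝ E) * μ (ball 0 1) := by
        simp only [μ.addHaar_ball_of_pos _ ρpos]
  have J : (s.card : ℝ≥0∞) * ENNReal.ofReal (δ ^ finrank ℝ E) ≤ ENNReal.ofReal (ρ ^ finrank ℝ E) :=
    (ENNReal.mul_le_mul_iff_left (measure_ball_pos _ _ zero_lt_one).ne' measure_ball_lt_top.ne).1 I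
  have K : (s.card : ℝ) ≤ (65 : ℝ) ^ finrank ℝ E := by
    have := ENNReal.toReal_le_of_le_ofReal (pow_nonneg ρpos.le _) J
    rw [ENNReal.toReal_mul, ENNReal.toReal_ofReal (by positivity), ENNReal.toReal_natCast] at this
    have e : ρ = 65 * δ := by norm_num [ρ, δ]
    rw [e, mul_pow] at this
    exact le_of_mul_le_mul_right this (by positivity)
  exact mod_cast K

lemma aux_net (E : Type*) [NormedAddCommGroup E] [NormedSpace ℝ E] [FiniteDimensional ℝ E] :
    ∃ N : Finset E, N.card ≤ 65 ^ finrank ℝ E ∧ (∀ y ∈ N, ‖y‖ ≤ 1) ∧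
      ∀ u : E, ‖u‖ ≤ 1 → ∃ y ∈ N, ‖u - y‖ ≤ 1/32 := by
  classical
  let P : ℕ → Prop := fun k => ∃ s : Finset E, s.card = k ∧ (∀ c ∈ s, ‖c‖ ≤ 1) ∧
    (∀ c ∈ s, ∀ d ∈ s, c ≠ d → 1/32 ≤ ‖c - d‖)
  have hP0 : P 0 := ⟨∅, by simp⟩
  have hb : ∀ k, P k → k ≤ 65 ^ finrank ℝ E := by
    rintro k ⟨s, rfl, h1, h2⟩; exact aux_card s h1 h2
  obtain ⟨s, hsc, h1, h2⟩ : P (Nat.findGreatest P (65 ^ finrank ℝ E)) :=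
    Nat.findGreatest_spec (Nat.zero_le _) hP0
  refine ⟨s, aux_card s h1 h2, h1, ?_⟩
  intro u hu
  by_contra! hcon
  have hus : u ∉ s := fun h => by have := hcon u h; norm_num at this
  have : P (s.card + 1) := by
    refine ⟨insert u s, Finset.card_insert_of_notMem hus, ?_, ?_⟩
    · intro c hc
      rcases Finset.mem_insert.1 hc with rfl | hc
      · exact hu
      · exact h1 c hc
    · intro c hc d hd hcd
      rcases Finset.mem_insert.1 hc with rfl | hc2 <;> rcases Finset.mem_insert.1 hd with rfl | hd2
      · exact absurd rfl hcd
      · exact (hcon d hd2).le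
      · rw [norm_sub_rev]; exact (hcon c hc2).le
      · exact h2 c hc2 d hd2 hcd
  have := Nat.le_findGreatest (hb _ this) this
  omega

lemma aux_lift (N : Finset E) (hN1 : ∀ y ∈ N, ‖y‖ ≤ 1)
    (hN2 : ∀ u : E, ‖u‖ ≤ 1 → ∃ y ∈ N, ‖u - y‖ ≤ 1/32) (L : E →L[ℝ] F) (c : ℝ) (hc : 0 ≤ c)
    (h : ∀ y ∈ N, c/5 * ‖y‖ ≤ ‖L y‖ ∧ ‖L y‖ ≤ 3 * c * ‖y‖) (x : E) :
    c/20 * ‖x‖ ≤ ‖L x‖ ∧ ‖L x‖ ≤ 4 * c * ‖x‖ := by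
  have hM : ‖L‖ ≤ 3 * c + ‖L‖/32 := by
    refine L.opNorm_le_of_unit_norm (by positivity) ?_
    intro u hu
    obtain ⟨y, hy, huy⟩ := hN2 u hu.le
    have e : L u = L y + L (u - y) := by rw [← map_add]; congr 1; abel
    have h1 := norm_add_le (L y) (L (u - y))
    rw [← e] at h1
    have h2 := L.le_opNorm (u - y)
    have h3 := (h y hy).2
    have h4 := hN1 y hy
    nlinarith [norm_nonneg L, norm_nonneg (u-y), norm_nonneg y]
  have hM' : ‖L‖ ≤ 96/31 * c := by linarith
  constructor
  · by_cases hx : x = 0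
    · simp [hx]
    have hx0 : 0 < ‖x‖ := norm_pos_iff.2 hx
    have hu : ‖(‖x‖⁻¹ • x)‖ = 1 := by rw [norm_smul, norm_inv, norm_norm, inv_mul_cancel₀ hx0.ne']
    have key : c/20 ≤ ‖L (‖x‖⁻¹ • x)‖ := by
      set u := ‖x‖⁻¹ • x
      obtain ⟨y, hy, huy⟩ := hN2 u hu.le
      have e : L y = L u - L (u - y) := by rw [← map_sub]; congr 1; abel
      have h1 := norm_sub_le (L u) (L (u - y))
      rw [← e] at h1
      have h2 := L.le_opNorm (u - y)
      have h3 := (h y hy).1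
      have h4 : ‖u‖ ≤ ‖y‖ + ‖u - y‖ := by
        have := norm_add_le y (u-y); simpa using this
      have h5 : 31/32 ≤ ‖y‖ := by linarith
      have h6 : ‖L‖ * ‖u - y‖ ≤ 96/31*c * (1/32) := by gcongr
      have h7 : c/5 * (31/32) ≤ c/5 * ‖y‖ := by gcongr
      linarith
    rw [map_smul, norm_smul, norm_inv, norm_norm, inv_mul_eq_div, le_div_iff₀ hx0] at key
    exact key
  · refine (L.le_opNorm x).trans ?_
    gcongr
    linarith

end net

/-- Euclidean norm. -/
noncomputable def l2 {k : ℕ} (x : Fin k → ℝ) : ℝ := ‖(WithLp.toLp 2 x : EuclideanSpace ℝ (Fin k))‖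

/-- Matrix application. -/
def app {n m : ℕ} (A : Fin n → Fin m → ℝ) (x : Fin m → ℝ) : Fin n → ℝ := fun i => ∑ j, A i j * x j

lemma l2_sq {k : ℕ} (x : Fin k → ℝ) : l2 x ^ 2 = ∑ j, x j ^ 2 := by
  rw [l2, EuclideanSpace.norm_sq_eq]; simp

lemma l2_nonneg {k : ℕ} (x : Fin k → ℝ) : 0 ≤ l2 x := norm_nonneg _

lemma aux_single {n m : ℕ} (y : Fin m → ℝ) :
    gaussianMatrix n m {A | ¬ (Real.sqrt n/5 * l2 y ≤ l2 (app A y) ∧ l2 (app A y) ≤ 3 * Real.sqrt n * l2 y)}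
      ≤ ENNReal.ofReal (2 * Real.exp (-n)) := by
  by_cases hy : l2 y = 0
  · have h0 : y = 0 := by
      have := norm_eq_zero.1 hy
      exact (WithLp.toLp_eq_zero 2).1 this
    have : {A : Fin n → Fin m → ℝ | ¬ (Real.sqrt n/5 * l2 y ≤ l2 (app A y) ∧ l2 (app A y) ≤ 3 * Real.sqrt n * l2 y)} = ∅ := by
      ext A
      have : app A y = 0 := by funext i; simp [app, h0]
      simp [this, hy]
      simp [l2]
    rw [this]; simp
  have hp : 0 < l2 y := lt_of_le_of_ne (l2_nonneg y) (Ne.symm hy)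
  set z : Fin m → ℝ := fun j => y j / l2 y with hz
  have hz1 : ∑ j, z j ^ 2 = 1 := by
    simp only [hz, div_pow, ← Finset.sum_div]
    rw [← l2_sq, div_self (by positivity)]
  have hA : ∀ A : Fin n → Fin m → ℝ, ∑ i, (∑ j, A i j * z j)^2 = (l2 (app A y) / l2 y)^2 := by
    intro A
    rw [div_pow, l2_sq, Finset.sum_div]
    refine Finset.sum_congr rfl fun i _ => ?_
    rw [← div_pow, app, Finset.sum_div]
    congr 1
    exact Finset.sum_congr rfl fun j _ => by simp only [hz]; ring
  have hsub : {A : Fin n → Fin m → ℝ | ¬ (Real.sqrt n/5 * l2 y ≤ l2 (app A y) ∧ l2 (app A y) ≤ 3 * Real.sqrt n * l2 y)}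
      ⊆ {A | ∑ i, (∑ j, A i j * z j)^2 ≤ n/25} ∪ {A | 9 * (n:ℝ) ≤ ∑ i, (∑ j, A i j * z j)^2} := by
    intro A hAA
    simp only [Set.mem_ofPred_eq, not_and_or, not_le] at hAA
    have hn : Real.sqrt n ^ 2 = n := Real.sq_sqrt (Nat.cast_nonneg n)
    rcases hAA with h | h
    · left
      simp only [Set.mem_ofPred_eq, hA]
      rw [← div_lt_iff₀ hp] at h
      have h0 : 0 ≤ l2 (app A y) / l2 y := div_nonneg (l2_nonneg _) hp.le
      rw [← hn]
      nlinarith [Real.sqrt_nonneg n]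
    · right
      simp only [Set.mem_ofPred_eq, hA]
      rw [← lt_div_iff₀ hp] at h
      rw [← hn]
      nlinarith [Real.sqrt_nonneg n]
  refine (measure_mono hsub).trans ((measure_union_le _ _).trans ?_)
  refine (add_le_add (aux_lower z hz1) (aux_upper z hz1)).trans ?_
  rw [← ENNReal.ofReal_add (by positivity) (by positivity), two_mul]

/-- The uniform event. -/
def Good (n m s : ℕ) (A : Fin n → Fin m → ℝ) : Prop :=
  ∀ S : Finset (Fin m), S.card = s → ∀ x : Fin m → ℝ, (∀ j, j ∉ S → x j = 0) →
    Real.sqrt n/20 * l2 x ≤ l2 (app A x) ∧ l2 (app A x) ≤ 4 * Real.sqrt n * l2 x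

/-- Extension by zero. -/
noncomputable def extZ {m : ℕ} (S : Finset (Fin m)) (y : S → ℝ) : Fin m → ℝ :=
  fun j => if h : j ∈ S then y ⟨j, h⟩ else 0

lemma l2_ext {m : ℕ} (S : Finset (Fin m)) (y : EuclideanSpace ℝ S) : l2 (extZ S y) = ‖y‖ := by
  have : l2 (extZ S y) ^ 2 = ‖y‖ ^ 2 := by
    rw [l2_sq, EuclideanSpace.norm_sq_eq, ← Finset.sum_subset (Finset.subset_univ S), ← Finset.sum_coe_sort S]
    · refine Finset.sum_congr rfl fun j _ => ?_
      simp [extZ]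
    · intro j _ hj; simp [extZ, hj]
  exact (pow_left_inj₀ (l2_nonneg _) (norm_nonneg _) two_ne_zero).1 this

lemma app_ext {n m : ℕ} (A : Fin n → Fin m → ℝ) (S : Finset (Fin m)) (y : EuclideanSpace ℝ S) :
    (WithLp.toLp 2 (app A (extZ S y)) : EuclideanSpace ℝ (Fin n)) =
      LinearMap.toContinuousLinearMap (Matrix.toEuclideanLin (Matrix.of fun i (j : S) => A i j)) y := by
  ext i
  simp only [app, LinearMap.coe_toContinuousLinearMap', Matrix.toLpLin_apply, Matrix.mulVec, dotProduct, Matrix.of_apply]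
  rw [← Finset.sum_subset (Finset.subset_univ S), ← Finset.sum_coe_sort S]
  · refine Finset.sum_congr rfl fun j _ => ?_
    simp [extZ]
  · intro j _ hj; simp [extZ, hj]

lemma aux_good {n m s : ℕ} :
    gaussianMatrix n m {A | ¬ Good n m s A} ≤
      ENNReal.ofReal (m.choose s * 65 ^ s * (2 * Real.exp (-n))) := by
  classical
  have hS : ∀ S : Finset (Fin m), S.card = s → gaussianMatrix n m {A | ¬ ∀ x : Fin m → ℝ, (∀ j, j ∉ S → x j = 0) →
    Real.sqrt n/20 * l2 x ≤ l2 (app A x) ∧ l2 (app A x) ≤ 4 * Real.sqrt n * l2 x} ≤ ENNReal.ofReal (65 ^ s * (2 * Real.exp (-n))) := by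
    intro S hSs
    obtain ⟨N, hN0, hN1, hN2⟩ := aux_net (EuclideanSpace ℝ S)
    have hfr : Module.finrank ℝ (EuclideanSpace ℝ S) = s := by simp [hSs]
    rw [hfr] at hN0
    have hsub : {A : Fin n → Fin m → ℝ | ¬ ∀ x : Fin m → ℝ, (∀ j, j ∉ S → x j = 0) →
        Real.sqrt n/20 * l2 x ≤ l2 (app A x) ∧ l2 (app A x) ≤ 4 * Real.sqrt n * l2 x} ⊆
        ⋃ y ∈ N, {A | ¬ (Real.sqrt n/5 * l2 (extZ S y) ≤ l2 (app A (extZ S y)) ∧ l2 (app A (extZ S y)) ≤ 3 * Real.sqrt n * l2 (extZ S y))} := by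
      intro A hA
      by_contra hcon
      apply hA
      intro x hx
      have := aux_lift N hN1 hN2 (LinearMap.toContinuousLinearMap (Matrix.toEuclideanLin (Matrix.of fun i (j : S) => A i j)))
        (Real.sqrt n) (Real.sqrt_nonneg _) (by
          intro y hy
          rw [← app_ext, ← l2_ext]
          by_contra h
          apply hcon
          simp only [Set.mem_iUnion]
          exact ⟨y, hy, h⟩) (WithLp.toLp 2 fun j : S => x j)
      rw [← app_ext, ← l2_ext] at this
      have e : extZ S (WithLp.toLp 2 fun j : S => x j : EuclideanSpace ℝ S) = x := by
        funext j
        by_cases hj : j ∈ S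
        · simp [extZ, hj]
        · simp [extZ, hj, hx j hj]
      rw [e] at this
      exact this
    refine (measure_mono hsub).trans ((measure_biUnion_finset_le _ _).trans ?_)
    refine (Finset.sum_le_sum fun y _ => aux_single _).trans ?_
    rw [Finset.sum_const, nsmul_eq_mul, ENNReal.ofReal_mul (p := 65 ^ s) (by positivity)]
    refine mul_le_mul' ?_ le_rfl
    rw [← ENNReal.ofReal_natCast]
    apply ENNReal.ofReal_le_ofReal
    exact_mod_cast hN0
  have hsub : {A : Fin n → Fin m → ℝ | ¬ Good n m s A} ⊆ ⋃ S ∈ Finset.powersetCard s (Finset.univ : Finset (Fin m)),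
      {A | ¬ ∀ x : Fin m → ℝ, (∀ j, j ∉ S → x j = 0) →
    Real.sqrt n/20 * l2 x ≤ l2 (app A x) ∧ l2 (app A x) ≤ 4 * Real.sqrt n * l2 x} := by
    intro A hA
    by_contra hcon
    apply hA
    intro S hSs
    by_contra h
    apply hcon
    simp only [Set.mem_iUnion]
    exact ⟨S, by simp [hSs], h⟩
  refine (measure_mono hsub).trans ((measure_biUnion_finset_le _ _).trans ?_)
  refine (Finset.sum_le_sum fun S h => hS S (Finset.mem_powersetCard.1 h).2).trans ?_
  rw [Finset.sum_const, nsmul_eq_mul, Finset.card_powersetCard, mul_assoc, ENNReal.ofReal_mul (by positivity)]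
  simp

lemma aux_count {n m s : ℕ} (hn : 1 ≤ n) (hnm : n < m) (L : ℝ) (hL : L = Real.log (Real.exp 1 * m / n))
    (h32 : 32 * L ≤ n) (hs : s = ⌊(n:ℝ) / (32 * L)⌋₊) :
    1 ≤ L ∧ 1 ≤ s ∧ s ≤ m ∧ (n:ℝ) / (64 * L) ≤ s ∧
    (m.choose s * 65 ^ s * (2 * Real.exp (-n)) : ℝ) ≤ 2 * Real.exp (-(1/2) * n) := by
  have hn0 : (0:ℝ) < n := by exact_mod_cast hn
  have hm0 : (0:ℝ) < m := by exact_mod_cast (by omega : 0 < m)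
  have hnm' : (n:ℝ) < m := by exact_mod_cast hnm
  have hLe : L = 1 + Real.log m - Real.log n := by
    rw [hL, Real.log_div (by positivity) (by positivity), Real.log_mul (by positivity) (by positivity), Real.log_exp]
  have hL1 : 1 ≤ L := by
    have := Real.log_le_log hn0 hnm'.le
    linarith
  have hL0 : 0 < L := by linarith
  set q := (n:ℝ) / (32 * L) with hq
  have hq1 : 1 ≤ q := by rw [hq, le_div_iff₀ (by positivity)]; linarith
  have hqn : q ≤ n := by
    rw [hq, div_le_iff₀ (by positivity)]; nlinarith
  have hsq : (s:ℝ) ≤ q := by rw [hs]; exact Nat.floor_le (by positivity)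
  have hs1 : 1 ≤ s := by rw [hs]; exact (Nat.one_le_floor_iff _).2 hq1
  have hs1' : (1:ℝ) ≤ s := by exact_mod_cast hs1
  have hsl : q / 2 ≤ s := by
    have : q < s + 1 := by rw [hs]; exact Nat.lt_floor_add_one q
    linarith
  have hsl' : (n:ℝ) / (64 * L) ≤ s := by
    have : (n:ℝ) / (64 * L) = q / 2 := by rw [hq]; field_simp; norm_num
    rw [this]; exact hsl
  refine ⟨hL1, hs1, ?_, hsl', ?_⟩
  · have : (s:ℝ) ≤ m := by linarith
    exact_mod_cast this
  · -- choose bound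
    have hs0 : (0:ℝ) < s := by linarith
    have h1 : (m.choose s : ℝ) ≤ Real.exp (s * (1 + Real.log m - Real.log s)) := by
      have a := Nat.choose_le_pow_div (α := ℝ) s m
      have b := Real.pow_div_factorial_le_exp _ hs0.le s
      have f0 : (0:ℝ) < (s.factorial : ℝ) := by exact_mod_cast s.factorial_pos
      have e1 : Real.exp (s * (1 + Real.log m - Real.log s)) = Real.exp s * (m:ℝ)^s / (s:ℝ)^s := by
        rw [show (s:ℝ) * (1 + Real.log m - Real.log s) = s + s * Real.log m - s * Real.log s by ring,
          Real.exp_sub, Real.exp_add, Real.exp_nat_mul, Real.exp_nat_mul, Real.exp_log hm0, Real.exp_log hs0]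
      rw [e1]
      refine a.trans ?_
      rw [div_le_iff₀ f0] at b
      rw [div_le_div_iff₀ f0 (by positivity)]
      calc (m:ℝ)^s * (s:ℝ)^s ≤ (m:ℝ)^s * (Real.exp s * s.factorial) := by gcongr
        _ = _ := by ring
    have h2 : ((65:ℝ)^s) ≤ Real.exp (s * 5) := by
      rw [Real.exp_nat_mul]
      gcongr
      have : Real.exp 5 = Real.exp 1 ^ 5 := by rw [← Real.exp_nat_mul]; norm_num
      rw [this]
      have := Real.exp_one_gt_d9
      calc (65:ℝ) ≤ 2.7 ^ 5 := by norm_num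
        _ ≤ _ := by gcongr; linarith
    have h3 : Real.log n - Real.log s ≤ 6 + L := by
      have hnle : (n:ℝ) ≤ 64 * L * s := by
        rw [div_le_iff₀ (by positivity)] at hsl'; linarith
      have := Real.log_le_log hn0 hnle
      rw [Real.log_mul (by positivity) (by positivity), Real.log_mul (by positivity) (by positivity)] at this
      have l2 := Real.log_two_lt_d9
      have l64 : Real.log 64 = 6 * Real.log 2 := by
        rw [show (64:ℝ) = 2^6 by norm_num, Real.log_pow]; norm_num
      have := Real.log_le_sub_one_of_pos hL0
      linarith
    have h4 : (s:ℝ) * (1 + Real.log m - Real.log s) + s * 5 ≤ n / 2 := by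
      have : (s:ℝ) * (1 + Real.log m - Real.log s) + s * 5 ≤ s * (13 * L) := by
        rw [← mul_add]; gcongr; linarith
      refine this.trans ?_
      calc (s:ℝ) * (13 * L) ≤ q * (13 * L) := by gcongr
        _ = 13/32 * n := by rw [hq]; field_simp
        _ ≤ _ := by linarith
    calc (m.choose s * 65 ^ s * (2 * Real.exp (-n)) : ℝ)
        ≤ Real.exp (s * (1 + Real.log m - Real.log s)) * Real.exp (s * 5) * (2 * Real.exp (-n)) := by gcongr
      _ = 2 * Real.exp ((s * (1 + Real.log m - Real.log s) + s * 5) + (-n)) := by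
          rw [Real.exp_add, Real.exp_add]; ring
      _ ≤ _ := by gcongr; linarith

lemma aux_weak {m : ℕ} (q lam : ℝ) (hq : 0 < q) (hlam : 0 < lam) (x : Fin m → ℝ)
    (hx : ∑ j : Fin m, |x j / ((j : ℕ) + 1 : ℝ) ^ (-lam)| ^ q ≤ 1)
    (J : Finset (Fin m)) (hJ : 0 < J.card) (t : ℝ) (ht : 0 ≤ t) (htJ : ∀ j ∈ J, t ≤ |x j|) :
    t ≤ (2 / (J.card : ℝ)) ^ (lam + 1 / q) := by
  set k := J.card with hk
  have hk0 : (0:ℝ) < k := by exact_mod_cast hJ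
  set J1 := J.filter (fun j : Fin m => k ≤ 2 * ((j:ℕ) + 1)) with hJ1
  have hcard : (k:ℝ)/2 ≤ J1.card := by
    have h1 := Finset.card_filter_add_card_filter_not (s := J) (fun j : Fin m => k ≤ 2 * ((j:ℕ) + 1))
    have h2 : (J.filter (fun j : Fin m => ¬ k ≤ 2 * ((j:ℕ) + 1))).card ≤ k / 2 := by
      rw [← Finset.card_range (k/2)]
      apply Finset.card_le_card_of_injOn (fun j : Fin m => (j:ℕ))
      · intro j hj
        have := (Finset.mem_filter.1 hj).2
        simp only [Finset.coe_range, Set.mem_Iio]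
        omega
      · intro a _ b _ h; exact Fin.ext h
    have h3 : k ≤ 2 * J1.card := by rw [hJ1]; omega
    have : (k:ℝ) ≤ 2 * J1.card := by exact_mod_cast h3
    linarith
  have hsum : (J1.card : ℝ) * (t * (k/2:ℝ)^lam) ^ q ≤ 1 := by
    refine le_trans ?_ hx
    calc (J1.card : ℝ) * (t * (k/2:ℝ)^lam) ^ q = ∑ j ∈ J1, (t * (k/2:ℝ)^lam) ^ q := by
          rw [Finset.sum_const, nsmul_eq_mul]
      _ ≤ ∑ j ∈ J1, |x j / ((j : ℕ) + 1 : ℝ) ^ (-lam)| ^ q := by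
          refine Finset.sum_le_sum fun j hj => ?_
          have hj' := Finset.mem_filter.1 hj
          have hj2 : (k:ℝ)/2 ≤ (j:ℕ) + 1 := by
            have : (k:ℝ) ≤ 2 * ((j:ℕ)+1) := by exact_mod_cast hj'.2
            linarith
          have hpos : (0:ℝ) < (j:ℕ) + 1 := by positivity
          apply Real.rpow_le_rpow (by positivity) _ hq.le
          rw [Real.rpow_neg hpos.le, div_inv_eq_mul, abs_mul, abs_of_pos (Real.rpow_pos_of_pos hpos lam)]
          exact mul_le_mul (htJ j hj'.1) (Real.rpow_le_rpow (by positivity) hj2 hlam.le) (by positivity) (abs_nonneg _)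
      _ ≤ _ := Finset.sum_le_sum_of_subset_of_nonneg (Finset.subset_univ _) fun j _ _ => by positivity
  set u := t * (k/2:ℝ)^lam with hu
  have hu0 : 0 ≤ u := by positivity
  have h1 : u ^ q ≤ 2 / k := by
    rw [le_div_iff₀ hk0]
    have : (k:ℝ)/2 * u^q ≤ J1.card * u^q := by gcongr
    linarith
  have h2 : u ≤ (2/k:ℝ)^(1/q) := by
    calc u = (u^q)^(1/q) := by rw [← Real.rpow_mul hu0, mul_one_div_cancel hq.ne', Real.rpow_one]
      _ ≤ _ := Real.rpow_le_rpow (by positivity) h1 (by positivity)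
  have h3 : t = (2/k:ℝ)^lam * u := by
    rw [hu, mul_left_comm, ← Real.mul_rpow (by positivity) (by positivity),
      show (2/k:ℝ) * (k/2) = 1 by field_simp, Real.one_rpow, mul_one]
  have h4 : (0:ℝ) < 2 / k := div_pos two_pos hk0
  rw [Real.rpow_add h4]
  exact h3.le.trans (mul_le_mul_of_nonneg_left h2 (Real.rpow_nonneg h4.le _))

lemma l2_sum_le {k : ℕ} {ι : Type*} (s : Finset ι) (f : ι → Fin k → ℝ) :
    l2 (∑ i ∈ s, f i) ≤ ∑ i ∈ s, l2 (f i) := by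
  unfold l2
  rw [WithLp.toLp_sum]
  exact norm_sum_le _ _

lemma app_sum {n m : ℕ} (A : Fin n → Fin m → ℝ) {ι : Type*} (s : Finset ι) (f : ι → Fin m → ℝ) :
    app A (∑ i ∈ s, f i) = ∑ i ∈ s, app A (f i) := by
  funext a
  simp only [app, Finset.sum_apply, Finset.mul_sum]
  exact Finset.sum_comm

lemma aux_det {n m s : ℕ} (hn : 1 ≤ n) (hs : 1 ≤ s) (hsm : s ≤ m) (A : Fin n → Fin m → ℝ) (hA : Good n m s A)
    (x : Fin m → ℝ) (hx : app A x = 0) (β : ℝ) (hβ : 0 < β)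
    (hw : ∀ J : Finset (Fin m), 0 < J.card → ∀ t, 0 ≤ t → (∀ j ∈ J, t ≤ |x j|) → t ≤ (2 / (J.card : ℝ)) ^ β) :
    l2 x ≤ 81 * ∑ i ∈ Finset.range (m - 1), Real.sqrt s * (2 / (((i:ℝ) + 1) * s)) ^ β := by
  classical
  have hn0 : (0:ℝ) < n := by exact_mod_cast hn
  have hs0 : (0:ℝ) < s := by exact_mod_cast hs
  have hA' : ∀ S : Finset (Fin m), S.card ≤ s → ∀ z : Fin m → ℝ, (∀ j, j ∉ S → z j = 0) →
    Real.sqrt n/20 * l2 z ≤ l2 (app A z) ∧ l2 (app A z) ≤ 4 * Real.sqrt n * l2 z := by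
    intro S hS z hz
    obtain ⟨S1, h1, h2⟩ := Finset.exists_superset_card_eq hS (by simpa using hsm)
    exact hA S1 h2 z fun j hj => hz j fun h => hj (h1 h)
  set π := Tuple.sort (fun j => -|x j|) with hπ
  have hmono : ∀ a b : Fin m, a ≤ b → |x (π b)| ≤ |x (π a)| := by
    intro a b hab
    have := Tuple.monotone_sort (fun j => -|x j|) hab
    simp only [Function.comp, ← hπ] at this
    linarith
  let T : ℕ → Finset (Fin m) := fun i => Finset.univ.filter fun j => ((π.symm j : Fin m) : ℕ) / s = i
  let B : ℕ → Fin m → ℝ := fun i j => if ((π.symm j : Fin m) : ℕ) / s = i then x j else 0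
  have hT : ∀ i, (T i).card ≤ s := by
    intro i
    have : s = (Finset.Ico (i * s) (i * s + s)).card := by simp
    conv_rhs => rw [this]
    apply Finset.card_le_card_of_injOn (fun j : Fin m => ((π.symm j : Fin m) : ℕ))
    · intro j hj
      have h1 : ((π.symm j : Fin m) : ℕ) / s = i := (Finset.mem_filter.1 hj).2
      simp only [Finset.coe_Ico, Set.mem_Ico]
      have h2 := (Nat.div_eq_iff (by omega : 0 < s)).1 h1
      omega
    · intro a _ b _ h; exact π.symm.injective (Fin.ext h)
  have hBT : ∀ i j, j ∉ T i → B i j = 0 := by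
    intro i j hj
    simp only [T, Finset.mem_filter, Finset.mem_univ, true_and] at hj
    simp [B, hj]
  have hB : ∀ i, Real.sqrt n/20 * l2 (B i) ≤ l2 (app A (B i)) ∧ l2 (app A (B i)) ≤ 4 * Real.sqrt n * l2 (B i) :=
    fun i => hA' (T i) (hT i) (B i) (hBT i)
  have hsumx : x = ∑ i ∈ Finset.range m, B i := by
    funext j
    rw [Finset.sum_apply]
    simp only [B]
    rw [Finset.sum_ite_eq, if_pos]
    rw [Finset.mem_range]
    exact lt_of_le_of_lt (Nat.div_le_self _ _) (π.symm j).2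
  obtain ⟨m', rfl⟩ : ∃ m', m = m' + 1 := ⟨m - 1, by omega⟩
  rw [Finset.sum_range_succ'] at hsumx
  simp only [Nat.add_sub_cancel]
  -- bound of blocks
  have hblock : ∀ i : ℕ, l2 (B (i+1)) ≤ Real.sqrt s * (2 / (((i:ℝ) + 1) * s)) ^ β := by
    intro i
    set b := (2 / (((i:ℝ) + 1) * s)) ^ β with hb
    have hb0 : 0 ≤ b := by positivity
    have hpt : ∀ j ∈ T (i+1), |x j| ≤ b := by
      intro j hj
      have h1 : ((π.symm j : Fin (m'+1)) : ℕ) / s = i+1 := (Finset.mem_filter.1 hj).2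
      set r := π.symm j with hr
      have hrj : π r = j := by simp [hr]
      have h2 : (i+1) * s ≤ (r:ℕ) := by
        have := (Nat.div_eq_iff (by omega : 0 < s)).1 h1
        rw [← h1]; exact Nat.div_mul_le_self _ _
      have h3 := hw ((Finset.Iic r).map π.toEmbedding) (by simp) |x j| (abs_nonneg _) (by
        intro l hl
        obtain ⟨a, ha, rfl⟩ := Finset.mem_map.1 hl
        rw [← hrj]
        exact hmono a r (Finset.mem_Iic.1 ha))
      rw [Finset.card_map, Fin.card_Iic] at h3
      refine h3.trans ?_
      rw [hb]
      apply Real.rpow_le_rpow (by positivity) _ hβ.le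
      have h4 : ((i:ℝ)+1) * s ≤ ((r:ℕ):ℝ) + 1 := by
        have : (((i+1) * s : ℕ) : ℝ) ≤ ((r:ℕ):ℝ) := by exact_mod_cast h2
        push_cast at this
        linarith
      push_cast
      gcongr
    have hsq : l2 (B (i+1)) ^ 2 ≤ (Real.sqrt s * b) ^ 2 := by
      rw [l2_sq, mul_pow, Real.sq_sqrt hs0.le]
      rw [← Finset.sum_subset (Finset.subset_univ (T (i+1))) (fun j _ hj => by rw [hBT _ _ hj]; simp)]
      calc ∑ j ∈ T (i+1), B (i+1) j ^ 2 ≤ ∑ j ∈ T (i+1), b^2 := by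
            refine Finset.sum_le_sum fun j hj => ?_
            have : B (i+1) j = x j := if_pos (Finset.mem_filter.1 hj).2
            rw [this, ← sq_abs]
            gcongr
            exact hpt j hj
        _ = (T (i+1)).card * b^2 := by rw [Finset.sum_const, nsmul_eq_mul]
        _ ≤ s * b^2 := by
            gcongr
            exact_mod_cast hT _
    exact (pow_le_pow_iff_left₀ (l2_nonneg _) (by positivity) two_ne_zero).1 hsq
  set R := ∑ i ∈ Finset.range m', l2 (B (i+1)) with hR
  have hRle : R ≤ ∑ i ∈ Finset.range m', Real.sqrt s * (2 / (((i:ℝ) + 1) * s)) ^ β :=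
    Finset.sum_le_sum fun i _ => hblock i
  have happ : l2 (app A (B 0)) ≤ 4 * Real.sqrt n * R := by
    have h1 : app A (B 0) = - ∑ i ∈ Finset.range m', app A (B (i+1)) := by
      rw [← app_sum]
      rw [hsumx] at hx
      have : app A (∑ i ∈ Finset.range m', B (i+1)) + app A (B 0) = 0 := by
        rw [← hx]; funext a; simp [app, mul_add, Finset.sum_add_distrib]
      exact (neg_eq_of_add_eq_zero_right this).symm
    have h2 : l2 (app A (B 0)) = l2 (∑ i ∈ Finset.range m', app A (B (i+1))) := by
      rw [h1]; unfold l2; rw [WithLp.toLp_neg, norm_neg]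
    rw [h2, hR, Finset.mul_sum]
    exact (l2_sum_le _ _).trans (Finset.sum_le_sum fun i _ => (hB (i+1)).2)
  have h0 : l2 (B 0) ≤ 80 * R := by
    have h1 := (hB 0).1.trans happ
    have hsn : 0 < Real.sqrt n := Real.sqrt_pos.2 hn0
    have : Real.sqrt n * l2 (B 0) ≤ Real.sqrt n * (80 * R) := by linarith
    exact le_of_mul_le_mul_left this hsn
  have hfin : l2 x ≤ R + l2 (B 0) := by
    have h1 : l2 x ≤ l2 (∑ i ∈ Finset.range m', B (i+1)) + l2 (B 0) := by
      conv_lhs => rw [hsumx]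
      unfold l2
      rw [WithLp.toLp_add]
      exact norm_add_le _ _
    exact h1.trans (by gcongr; exact l2_sum_le _ _)
  linarith

/-- For `0 < p ≤ 1` and polynomially decaying semiaxes `σ_j = j^{-λ}`
(0-indexed: `σ ⟨j-1⟩ = j^{-λ}`), with probability at least `1 - 2 exp(-C n)` one has
`rad(E^m_{p,σ}, ker G_{n,m}) ≤ K (log(e m/n)/n)^{λ + 1/p - 1/2}`,
provided `n ≥ D log(e m/n)`. -/
theorem statement2 (p : ℝ≥0∞) (hp0 : 0 < p) (hp1 : p ≤ 1) (lam : ℝ) (hlam : 0 < lam) :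
    ∃ C D K : ℝ, 0 < C ∧ 0 < D ∧ 0 < K ∧
      ∀ (m n : ℕ), 1 ≤ n → n < m →
        D * Real.log (Real.exp 1 * m / n) ≤ n →
        ENNReal.ofReal (1 - 2 * Real.exp (-C * n)) ≤
          gaussianMatrix n m {A |
            radq 2 (ellipsoid p (fun j : Fin m => ((j : ℕ) + 1 : ℝ) ^ (-lam))) (kerSet A) ≤
              K * (Real.log (Real.exp 1 * m / n) / n) ^ (lam + 1 / p.toReal - 1 / 2)} := by
  have hpt : p ≠ ∞ := ne_top_of_le_ne_top ENNReal.one_ne_top hp1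
  set q := p.toReal with hqd
  have hq : 0 < q := ENNReal.toReal_pos hp0.ne' hpt
  have hq1 : q ≤ 1 := by
    have := ENNReal.toReal_mono ENNReal.one_ne_top hp1
    simpa using this
  set β := lam + 1 / q with hβ
  have hβ1 : 1 < β := by
    have : 1 ≤ 1 / q := by rw [le_div_iff₀ hq]; linarith
    linarith
  have hsummable : Summable (fun i : ℕ => 1 / ((i:ℝ) + 1) ^ β) := by
    have := (summable_nat_add_iff 1).2 (Real.summable_one_div_nat_rpow.2 hβ1)
    simpa using this
  set Z := ∑' i : ℕ, 1 / ((i:ℝ) + 1) ^ β with hZ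
  have hZ0 : 0 < Z := hsummable.tsum_pos (fun i => by positivity) 0 (by positivity)
  refine ⟨1/2, 32, 81 * (2 ^ β * Z * 64 ^ (β - 1/2)), by norm_num, by norm_num, by positivity, ?_⟩
  intro m n hn hnm hD
  set L := Real.log (Real.exp 1 * m / n) with hL
  obtain ⟨hL1, hs1, hsm, hsl, hprob⟩ := aux_count hn hnm L hL hD rfl
  set s := ⌊(n:ℝ) / (32 * L)⌋₊
  have hn0 : (0:ℝ) < n := by exact_mod_cast hn
  have hs0 : (0:ℝ) < s := by exact_mod_cast hs1
  have hL0 : 0 < L := by linarith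
  set G := {A : Fin n → Fin m → ℝ |
            radq 2 (ellipsoid p (fun j : Fin m => ((j : ℕ) + 1 : ℝ) ^ (-lam))) (kerSet A) ≤
              81 * (2 ^ β * Z * 64 ^ (β - 1/2)) * (L / n) ^ (β - 1 / 2)} with hG
  have hsub : {A | Good n m s A} ⊆ G := by
    intro A hA
    rw [hG, Set.mem_ofPred_eq]
    apply Real.sSup_le _ (by positivity)
    rintro _ ⟨x, ⟨hxE, hxk⟩, rfl⟩
    have hl2 : lpnorm 2 x = l2 x := by
      rw [lpnorm, if_neg (by simp), l2, EuclideanSpace.norm_eq, Real.sqrt_eq_rpow]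
      simp
    rw [hl2]
    have hxE' : ∑ j : Fin m, |x j / ((j : ℕ) + 1 : ℝ) ^ (-lam)| ^ q ≤ 1 := by
      have h1 : lpnorm p (fun j : Fin m => x j / ((j : ℕ) + 1 : ℝ) ^ (-lam)) ≤ 1 := hxE
      rw [lpnorm, if_neg hpt] at h1
      by_contra hcon
      exact absurd h1 (not_le.2 (Real.one_lt_rpow (not_le.1 hcon) (by positivity)))
    have hd := aux_det hn hs1 hsm A hA x (funext fun i => hxk i) β (by linarith)
      (fun J hJ t ht htJ => aux_weak q lam hq hlam x hxE' J hJ t ht htJ)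
    refine hd.trans ?_
    rw [mul_assoc]
    refine mul_le_mul_of_nonneg_left ?_ (by norm_num)
    have e1 : ∀ i : ℕ, Real.sqrt s * (2 / (((i:ℝ) + 1) * s)) ^ β
        = (2 ^ β * (1 / (s:ℝ)) ^ (β - 1/2)) * (1 / ((i:ℝ)+1) ^ β) := by
      intro i
      rw [show 2 / (((i:ℝ) + 1) * s) = 2 * (1 / (s:ℝ)) * (1 / ((i:ℝ)+1)) by field_simp,
        Real.mul_rpow (by positivity) (by positivity), Real.mul_rpow (by positivity) (by positivity),
        Real.rpow_sub (by positivity), ← Real.sqrt_eq_rpow, Real.div_rpow zero_le_one (by positivity : (0:ℝ) ≤ (i:ℝ)+1), Real.one_rpow,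
        Real.sqrt_div zero_le_one, Real.sqrt_one, div_div_eq_mul_div]
      ring
    simp_rw [e1]
    rw [← Finset.mul_sum]
    have h1 : ∑ i ∈ Finset.range (m-1), 1 / ((i:ℝ)+1) ^ β ≤ Z :=
      hsummable.sum_le_tsum _ (fun i _ => by positivity)
    have h2 : (1 / (s:ℝ)) ^ (β - 1/2) ≤ 64 ^ (β - 1/2) * (L / n) ^ (β - 1/2) := by
      rw [← Real.mul_rpow (by norm_num) (by positivity)]
      apply Real.rpow_le_rpow (by positivity) _ (by linarith)
      rw [← mul_div_assoc, div_le_div_iff₀ hs0 hn0]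
      rw [div_le_iff₀ (by positivity)] at hsl
      linarith
    calc _ ≤ 2 ^ β * (64 ^ (β - 1/2) * (L / n) ^ (β - 1/2)) * Z := by gcongr
      _ = _ := by ring
  have : IsProbabilityMeasure (gaussianMatrix n m) := by unfold gaussianMatrix; infer_instance
  have hb := (aux_good (n := n) (m := m) (s := s)).trans (ENNReal.ofReal_le_ofReal hprob)
  have hun : 1 ≤ gaussianMatrix n m G + gaussianMatrix n m {A | ¬ Good n m s A} := by
    rw [← measure_univ (μ := gaussianMatrix n m)]
    refine (measure_mono ?_).trans (measure_union_le _ _)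
    intro A _
    by_cases h : Good n m s A
    · exact Or.inl (hsub h)
    · exact Or.inr h
  rw [ENNReal.ofReal_sub _ (by positivity), ENNReal.ofReal_one]
  refine tsub_le_iff_right.2 (hun.trans ?_)
  gcongr
end
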